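/- Normal-families/compactness property: assume m > 4 and let Ω ⊆ ℝ^m be open. Let (f_j)_{j≥1} be a sequence in C²(Ω×𝔹^m, ℋ_k) with 𝒟_k f_j = 0 in Ω × 𝔹^m for every j (each f_j is then automatically infinitely differentiable in (x,ν)), and suppose that for every compact K ⊂ Ω, sup_j ∫_K ∫_{𝔹^m} |f_j(x,ν)| dν dx < ∞. Then there exist a subsequence (f_{j_k}) and a function f ∈ C²(Ω×𝔹^m, ℋ_k) with 𝒟_k f = 0 in Ω × 𝔹^m such that for every multi-index α ∈ ℕ^m and all compact sets K₁ ⊂ Ω and K₂ ⊂ 𝔹^m, the derivatives D_x^α f_{j_k} converge uniformly to D_x^α f on K₁ × K₂. -/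

import Mathlib

noncomputable section

open MeasureTheory Metric Filter Topology
open scoped RealInnerProductSpace

/-- `ℝ^m` as a Euclidean space. -/
abbrev Evec (m : ℕ) : Type := EuclideanSpace ℝ (Fin m)

/-- Partial derivative in the `i`-th coordinate direction. -/
def pdv {m : ℕ} (i : Fin m) (f : Evec m → ℝ) (x : Evec m) : ℝ :=
  fderiv ℝ f x (EuclideanSpace.single i 1)

/-- Euclidean Laplacian on `ℝ^m`. -/
def lapl {m : ℕ} (f : Evec m → ℝ) (x : Evec m) : ℝ :=
  ∑ i : Fin m, pdv i (pdv i f) x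

/-- `p` is a real-valued polynomial function on `ℝ^m`, homogeneous of degree `k` and
harmonic; i.e. `p ∈ ℋ_k`. -/
def IsHk (m k : ℕ) (p : Evec m → ℝ) : Prop :=
  (∃ P : MvPolynomial (Fin m) ℝ, ∀ x : Evec m, p x = MvPolynomial.eval (fun i => x i) P) ∧
  (∀ (c : ℝ) (x : Evec m), p (c • x) = c ^ k * p x) ∧
  (∀ x : Evec m, lapl p x = 0)

/-- The surface measure `dS` on the unit sphere `𝕊^{m-1}`, as a measure on `ℝ^m`. -/
def sphereM (m : ℕ) : Measure (Evec m) :=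
  Measure.map Subtype.val ((volume : Measure (Evec m)).toSphere)

/-- `ω_m`, the surface area of the unit sphere `𝕊^{m-1}`. -/
def omegaS (m : ℕ) : ℝ := (sphereM m Set.univ).toReal

/-- The constant `c_{m,k} = 2(m+2k-2)/((m-2)ω_m)`. -/
def cmk (m k : ℕ) : ℝ := 2 * ((m : ℝ) + 2 * k - 2) / (((m : ℝ) - 2) * omegaS m)

/-- The reflection `R_a(u) = u - 2⟨a,u⟩a/|a|²` (in Clifford notation `a u a/|a|²`). -/
def reflv {m : ℕ} (a u : Evec m) : Evec m :=
  u - (2 * ⟪a, u⟫ / ‖a‖ ^ 2) • a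

/-- `dim ℋ_k`. -/
def hdim (m k : ℕ) : ℕ :=
  Nat.choose (m + k - 1) (m - 1) - Nat.choose (m + k - 3) (m - 1)

/-- `Z` is the reproducing kernel `Z_k` of `ℋ_k` on the unit sphere: a symmetric,
rotation invariant kernel, bounded by `dim ℋ_k` on the unit ball, belonging to `ℋ_k`
in the first variable and reproducing elements of `ℋ_k` from their spherical values. -/
def IsZk (m k : ℕ) (Z : Evec m → Evec m → ℝ) : Prop :=
  (∀ v : Evec m, IsHk m k (fun u => Z u v)) ∧
  (∀ p : Evec m → ℝ, IsHk m k p → ∀ v : Evec m, (∫ u, Z u v * p u ∂(sphereM m)) = p v) ∧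
  (∀ u v : Evec m, Z u v = Z v u) ∧
  (∀ u v : Evec m, ‖u‖ ≤ 1 → ‖v‖ ≤ 1 → |Z u v| ≤ (hdim m k : ℝ)) ∧
  (∀ (A : Evec m ≃ₗᵢ[ℝ] Evec m) (u v : Evec m), Z (A u) (A v) = Z u v)

/-- The point `(x', y) ∈ ℝ^{d+1}` with first `d` coordinates `x'` and last coordinate `y`. -/
def upP (d : ℕ) (x' : Evec d) (y : ℝ) : Evec (d + 1) :=
  (EuclideanSpace.equiv (Fin (d + 1)) ℝ).symm
    (Fin.snoc (⇑(EuclideanSpace.equiv (Fin d) ℝ) x') y)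

/-- The first `d` coordinates of a point of `ℝ^{d+1}`. -/
def downP (d : ℕ) (x : Evec (d + 1)) : Evec d :=
  (EuclideanSpace.equiv (Fin d) ℝ).symm (fun i => x (Fin.castSucc i))

/-- The last coordinate of a point of `ℝ^{d+1}`. -/
def lastP (d : ℕ) (x : Evec (d + 1)) : ℝ := x (Fin.last d)

/-- The Poisson kernel `P_H` for bosonic Laplacians in the upper half-space `ℝ^{d+1}_+`,
`P_H(x,t,u,v) = c_{m,k} (y/|x-t|^m) Z_k(R_{x-t}(u), v)` with `m = d+1`, `x = (x',y)`,
`t = (t',0)`. -/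
def PH (d k : ℕ) (Z : Evec (d + 1) → Evec (d + 1) → ℝ) (x' : Evec d) (y : ℝ)
    (t' : Evec d) (u v : Evec (d + 1)) : ℝ :=
  cmk (d + 1) k * (y / ‖upP d x' y - upP d t' 0‖ ^ (d + 1)) *
    Z (reflv (upP d x' y - upP d t' 0) u) v

/-- The Poisson integral `P_H[f]` in the upper half-space. -/
def PHint (d k : ℕ) (Z : Evec (d + 1) → Evec (d + 1) → ℝ)
    (f : Evec d → Evec (d + 1) → ℝ) (x' : Evec d) (y : ℝ) (v : Evec (d + 1)) : ℝ :=
  ∫ t' : Evec d, (∫ u, PH d k Z x' y t' u v * f t' u ∂(sphereM (d + 1)))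

/-- The Poisson kernel `P_B` for bosonic Laplacians in the unit ball. -/
def PB (m k : ℕ) (Z : Evec m → Evec m → ℝ) (x ζ ω ν : Evec m) : ℝ :=
  (cmk m k / 2) * ((1 - ‖x‖ ^ 2) / ‖x - ζ‖ ^ m) * Z (reflv (x - ζ) ω) ν

/-- The Poisson integral `P_B[h]` in the unit ball. -/
def PBint (m k : ℕ) (Z : Evec m → Evec m → ℝ) (h : Evec m → Evec m → ℝ)
    (x ν : Evec m) : ℝ :=
  ∫ ζ, (∫ ω, PB m k Z x ζ ω ν * h ζ ω ∂(sphereM m)) ∂(sphereM m)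

/-- Partial derivative in the first (`x`) variable. -/
def pd1 {m : ℕ} (i : Fin m) (f : Evec m → Evec m → ℝ) : Evec m → Evec m → ℝ :=
  fun x u => fderiv ℝ (fun x₁ => f x₁ u) x (EuclideanSpace.single i 1)

/-- Partial derivative in the second (`u`) variable. -/
def pd2 {m : ℕ} (i : Fin m) (f : Evec m → Evec m → ℝ) : Evec m → Evec m → ℝ :=
  fun x u => fderiv ℝ (fun u₁ => f x u₁) u (EuclideanSpace.single i 1)

/-- The bosonic Laplacian `𝒟_k`. -/
def Dk (m k : ℕ) (f : Evec m → Evec m → ℝ) : Evec m → Evec m → ℝ := fun x u =>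
  (∑ i : Fin m, pd1 i (pd1 i f) x u)
    - (4 / ((m : ℝ) + 2 * k - 2)) *
        ∑ i : Fin m, ∑ j : Fin m, u i * pd1 i (pd2 j (pd1 j f)) x u
    + (4 * ‖u‖ ^ 2 / (((m : ℝ) + 2 * k - 2) * ((m : ℝ) + 2 * k - 4))) *
        ∑ i : Fin m, ∑ j : Fin m, pd2 i (pd1 i (pd2 j (pd1 j f))) x u

/-- `f ∈ C²(Ω×𝔹^m, ℋ_k)`: twice continuously differentiable on `Ω × 𝔹^m` and, for each
fixed `x ∈ Ω`, coinciding in the second variable with an element of `ℋ_k`. -/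
def C2Hk (m k : ℕ) (Ω : Set (Evec m)) (f : Evec m → Evec m → ℝ) : Prop :=
  ContDiffOn ℝ 2 (fun q : Evec m × Evec m => f q.1 q.2) (Ω ×ˢ ball (0 : Evec m) 1) ∧
  ∀ x ∈ Ω, ∃ q, IsHk m k q ∧ ∀ u ∈ closedBall (0 : Evec m) 1, f x u = q u

/-- The `L^p` norm `(∫_{ℝ^{m-1}} ∫_{𝕊^{m-1}} |f(x',u)|^p dS(u) dx')^{1/p}` (`m = d+1`),
valued in `ℝ≥0∞`. -/
def lpH (d : ℕ) (p : ℝ) (f : Evec d → Evec (d + 1) → ℝ) : ENNReal :=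
  (∫⁻ x' : Evec d, ∫⁻ u, ENNReal.ofReal (|f x' u| ^ p) ∂(sphereM (d + 1))) ^ (1 / p)

/-- `f ∈ L^p(ℝ^{m-1}×𝔹^m, ℋ_k)` (`m = d+1`). -/
def MemLpH (d k : ℕ) (p : ℝ) (f : Evec d → Evec (d + 1) → ℝ) : Prop :=
  Measurable (fun q : Evec d × Evec (d + 1) => f q.1 q.2) ∧
  (∀ x' : Evec d, ∃ q, IsHk (d + 1) k q ∧
    ∀ u ∈ closedBall (0 : Evec (d + 1)) 1, f x' u = q u) ∧
  lpH d p f < ⊤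

/-- The `L^p` norm `(∫_{𝕊^{m-1}} ∫_{𝕊^{m-1}} |h(ζ,ω)|^p dS(ω) dS(ζ))^{1/p}`,
valued in `ℝ≥0∞`. -/
def lpS (m : ℕ) (p : ℝ) (h : Evec m → Evec m → ℝ) : ENNReal :=
  (∫⁻ ζ, ∫⁻ ω, ENNReal.ofReal (|h ζ ω| ^ p) ∂(sphereM m) ∂(sphereM m)) ^ (1 / p)

/-- `h ∈ L^p(𝕊^{m-1}×𝔹^m, ℋ_k)`. -/
def MemLpS (m k : ℕ) (p : ℝ) (h : Evec m → Evec m → ℝ) : Prop :=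
  Measurable (fun q : Evec m × Evec m => h q.1 q.2) ∧
  (∀ ζ : Evec m, ‖ζ‖ = 1 → ∃ q, IsHk m k q ∧
    ∀ ω ∈ closedBall (0 : Evec m) 1, h ζ ω = q ω) ∧
  lpS m p h < ⊤

/-- Iterated partial derivative `D_x^α` in the first variable, for a multi-index `α ∈ ℕ^m`. -/
def Dx {m : ℕ} (α : Fin m → ℕ) (f : Evec m → Evec m → ℝ) : Evec m → Evec m → ℝ :=
  (List.finRange m).foldr (fun i g => (pd1 i)^[α i] g) f

/-- Iterated partial derivative `D_ν^β` in the second variable, for a multi-index `β ∈ ℕ^m`. -/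
def Dv {m : ℕ} (β : Fin m → ℕ) (f : Evec m → Evec m → ℝ) : Evec m → Evec m → ℝ :=
  (List.finRange m).foldr (fun i g => (pd2 i)^[β i] g) f

open scoped ContDiff

/-- An algebraic form of the ellipticity of the bosonic Laplacian, modulo a submodule `N`. -/
theorem iterate_mem_of_bosonic {M : Type*} [AddCommGroup M] [Module ℝ M]
    (N : Submodule ℝ M) (t d R X En : M →ₗ[ℝ] M)
    (hdt : ∀ g, d (t g) = t (d g) + X g)
    (hdR : ∀ g, d (R g) = R (d g) + (2 : ℝ) • t g)
    (hXt : ∀ g, X (t g) = t (X g)) (hXd : ∀ g, X (d g) = d (X g))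
    (hXR : ∀ g, X (R g) = R (X g))
    (hEn : ∀ g, En (d g) = d (En g) - d g)
    (hneg : ∀ g, En g = -g → g = 0)
    (htN : ∀ g ∈ N, t g ∈ N) (hdN : ∀ g ∈ N, d g ∈ N) (hRN : ∀ g ∈ N, R g ∈ N)
    (hXN : ∀ g ∈ N, X g ∈ N) (m : ℝ) (hm : 4 < m) (n : ℕ) :
    ∀ (c : ℝ) (g : M), n * (m + n - 3) < (m + 2 * n - 4) * c → En g = (n : ℝ) • g →
      t (d g) - (1 / (m + 2 * n - 4)) • R (d (d g)) - c • X g ∈ N →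
      X^[n + 1] g ∈ N := by
  have hXtn : ∀ n g, X^[n] (t g) = t (X^[n] g) := fun n g =>
    (Function.Commute.iterate_left (f := X) (g := t) hXt n) g
  have hXdn : ∀ n g, X^[n] (d g) = d (X^[n] g) := fun n g =>
    (Function.Commute.iterate_left (f := X) (g := d) hXd n) g
  have hXRn : ∀ n g, X^[n] (R g) = R (X^[n] g) := fun n g =>
    (Function.Commute.iterate_left (f := X) (g := R) hXR n) g
  have hXNn : ∀ n, ∀ g ∈ N, X^[n] g ∈ N := by
    intro n
    induction n with
    | zero => intro g hg; simpa using hg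
    | succ n ih => intro g hg; rw [Function.iterate_succ_apply]; exact ih _ (hXN _ hg)
  have key : ∀ (n : ℕ) (a c : ℝ) (g : M), c ≠ 0 → X^[n] (d g) ∈ N →
      t (d g) - a • R (d (d g)) - c • X g ∈ N → X^[n + 1] g ∈ N := by
    intro n a c g hc hq h
    have h1 := hXNn n _ h
    have e1 : X^[n] (t (d g) - a • R (d (d g)) - c • X g)
        = t (X^[n] (d g)) - a • R (d (X^[n] (d g))) - c • X^[n + 1] g := by
      simp only [← Module.End.pow_apply, map_sub, map_smul]
      simp only [Module.End.pow_apply, hXtn, hXRn, hXdn, Function.iterate_succ_apply]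
    rw [e1] at h1
    have h2 : t (X^[n] (d g)) - a • R (d (X^[n] (d g))) ∈ N :=
      N.sub_mem (htN _ hq) (N.smul_mem _ (hRN _ (hdN _ hq)))
    have h3 : c • X^[n + 1] g ∈ N := by
      have := N.sub_mem h2 h1
      simpa using this
    exact (N.smul_mem_iff hc).1 h3
  induction n with
  | zero =>
    intro c g hc hg h
    have hc0 : c ≠ 0 := by rintro rfl; simp at hc
    have hq : d g = 0 := hneg _ (by rw [hEn, hg]; simp)
    exact key 0 _ c g hc0 (by simp [hq]) h
  | succ n ih =>
    intro c g hc hg h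
    push_cast at hc h hg
    have hn : (0 : ℝ) ≤ n := n.cast_nonneg
    have hp : 0 < m + 2 * (n + 1 : ℝ) - 4 := by linarith
    have hp' : 0 < m + 2 * (n : ℝ) - 4 := by linarith
    have hc0 : c ≠ 0 := by
      rintro rfl
      have : 0 < ((n : ℝ) + 1) * (m + (n + 1) - 3) := by
        apply mul_pos <;> linarith
      linarith
    refine key (n + 1) _ c g hc0 ?_ h
    refine ih ((c - 1) * (m + 2 * (n + 1) - 4) / (m + 2 * n - 4)) (d g) ?_ ?_ ?_
    · rw [mul_div_cancel₀ _ hp'.ne']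
      nlinarith
    · rw [hEn, hg, map_smul, add_smul, one_smul, add_sub_cancel_right]
    · have h1 := N.smul_mem ((m + 2 * (n + 1) - 4) / (m + 2 * n - 4)) (hdN _ h)
      convert h1 using 1
      simp only [map_sub, map_smul, hdt, hdR, ← hXd]
      match_scalars <;> field_simp <;> ring

/-- The space of smooth functions on `ℝ^m × ℝ^m`. -/
def SmoothFn (m : ℕ) : Submodule ℝ (Evec m × Evec m → ℝ) where
  carrier := {g | ContDiff ℝ ∞ g}
  add_mem' := by
    intro f g hf hg
    rw [Set.mem_ofPred_eq] at *
    exact hf.add hg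
  zero_mem' := by
    rw [Set.mem_ofPred_eq]
    exact contDiff_const (c := (0 : ℝ))
  smul_mem' := by
    intro c g hg
    rw [Set.mem_ofPred_eq] at *
    exact hg.const_smul c

namespace SmoothFn

variable {m : ℕ}

theorem contDiff (g : SmoothFn m) : ContDiff ℝ ∞ (g : Evec m × Evec m → ℝ) := g.2

theorem differentiable (g : SmoothFn m) : Differentiable ℝ (g : Evec m × Evec m → ℝ) :=
  (contDiff g).differentiable (by simp)

/-- Directional derivative, acting on smooth functions. -/
def dir (v : Evec m × Evec m) : SmoothFn m →ₗ[ℝ] SmoothFn m where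
  toFun g := ⟨fun p => fderiv ℝ (g : Evec m × Evec m → ℝ) p v, by
    exact ((contDiff g).fderiv_right (m := ∞) (by simp)).clm_apply contDiff_const⟩
  map_add' f g := by
    ext p
    simp [fderiv_add ((differentiable f) p) ((differentiable g) p)]
  map_smul' c g := by
    ext p
    simp [fderiv_const_smul ((differentiable g) p)]

theorem dir_apply (v : Evec m × Evec m) (g : SmoothFn m) (p : Evec m × Evec m) :
    (dir v g : Evec m × Evec m → ℝ) p = fderiv ℝ g p v := rfl

theorem dir_comm (v w : Evec m × Evec m) (g : SmoothFn m) : dir v (dir w g) = dir w (dir v g) := by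
  ext p
  have h : ∀ v w, (dir v (dir w g) : Evec m × Evec m → ℝ) p = fderiv ℝ (fderiv ℝ g) p v w := by
    intro v w
    have hd : DifferentiableAt ℝ (fderiv ℝ (g : Evec m × Evec m → ℝ)) p :=
      (((contDiff g).fderiv_right (m := ∞) (by simp)).differentiable (by simp)) p
    have : (dir w g : Evec m × Evec m → ℝ) = fun p => fderiv ℝ g p w := rfl
    rw [dir_apply, this, fderiv_clm_apply hd (differentiableAt_const w)]
    simp
  rw [h, h]
  exact ((contDiff g).contDiffAt.isSymmSndFDerivAt
    (by simpa using ENat.LEInfty.out)).eq v w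

/-- Multiplication by the `i`-th coordinate of the second variable. -/
def mulCoord (i : Fin m) : SmoothFn m →ₗ[ℝ] SmoothFn m where
  toFun g := ⟨fun p => p.2 i * (g : Evec m × Evec m → ℝ) p, by
    refine ContDiff.mul ?_ (contDiff g)
    fun_prop⟩
  map_add' f g := by ext p; simp [mul_add]
  map_smul' c g := by ext p; simp [mul_left_comm]

theorem mulCoord_apply (i : Fin m) (g : SmoothFn m) (p : Evec m × Evec m) :
    (mulCoord i g : Evec m × Evec m → ℝ) p = p.2 i * (g : Evec m × Evec m → ℝ) p := rfl

theorem dir_mulCoord (v : Evec m × Evec m) (i : Fin m) (g : SmoothFn m) :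
    dir v (mulCoord i g) = mulCoord i (dir v g) + v.2 i • g := by
  ext p
  have h1 : HasFDerivAt (fun p : Evec m × Evec m => p.2 i)
      ((EuclideanSpace.proj (𝕜 := ℝ) i).comp (ContinuousLinearMap.snd ℝ (Evec m) (Evec m))) p :=
    ((EuclideanSpace.proj (𝕜 := ℝ) i).comp
      (ContinuousLinearMap.snd ℝ (Evec m) (Evec m))).hasFDerivAt (x := p)
  have h2 := h1.mul ((differentiable g) p).hasFDerivAt
  have : (mulCoord i g : Evec m × Evec m → ℝ) = fun p => p.2 i * (g : Evec m × Evec m → ℝ) p := rfl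
  rw [dir_apply, this]
  erw [h2.fderiv]
  simp [mulCoord_apply, dir_apply, mul_comm]

/-- The partial derivative `∂_{x_i}`. -/
def dx (i : Fin m) : SmoothFn m →ₗ[ℝ] SmoothFn m := dir (EuclideanSpace.single i 1, 0)

/-- The partial derivative `∂_{u_i}`. -/
def du (i : Fin m) : SmoothFn m →ₗ[ℝ] SmoothFn m := dir (0, EuclideanSpace.single i 1)

theorem dx_mulCoord (i j : Fin m) (g : SmoothFn m) :
    dx i (mulCoord j g) = mulCoord j (dx i g) := by
  simp [dx, dir_mulCoord]

theorem du_mulCoord (i j : Fin m) (g : SmoothFn m) :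
    du i (mulCoord j g) = mulCoord j (du i g) + if i = j then g else 0 := by
  simp only [du, dir_mulCoord, PiLp.single_apply, eq_comm (a := i)]
  split_ifs <;> simp

theorem dx_dx (i j : Fin m) (g : SmoothFn m) : dx i (dx j g) = dx j (dx i g) := dir_comm _ _ g
theorem dx_du (i j : Fin m) (g : SmoothFn m) : dx i (du j g) = du j (dx i g) := dir_comm _ _ g
theorem du_du (i j : Fin m) (g : SmoothFn m) : du i (du j g) = du j (du i g) := dir_comm _ _ g

/-- `⟨u, ∂_x⟩`. -/
def opT : SmoothFn m →ₗ[ℝ] SmoothFn m := ∑ i : Fin m, mulCoord i ∘ₗ dx i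
/-- `⟨∂_u, ∂_x⟩`. -/
def opD : SmoothFn m →ₗ[ℝ] SmoothFn m := ∑ i : Fin m, du i ∘ₗ dx i
/-- Multiplication by `|u|²`. -/
def opR : SmoothFn m →ₗ[ℝ] SmoothFn m := ∑ i : Fin m, mulCoord i ∘ₗ mulCoord i
/-- `Δ_x`. -/
def opX : SmoothFn m →ₗ[ℝ] SmoothFn m := ∑ i : Fin m, dx i ∘ₗ dx i
/-- The Euler operator in `u`. -/
def opE : SmoothFn m →ₗ[ℝ] SmoothFn m := ∑ i : Fin m, mulCoord i ∘ₗ du i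

theorem opT_apply (g : SmoothFn m) : opT g = ∑ i, mulCoord i (dx i g) := by simp [opT]
theorem opD_apply (g : SmoothFn m) : opD g = ∑ i, du i (dx i g) := by simp [opD]
theorem opR_apply (g : SmoothFn m) : opR g = ∑ i, mulCoord i (mulCoord i g) := by simp [opR]
theorem opX_apply (g : SmoothFn m) : opX g = ∑ i, dx i (dx i g) := by simp [opX]
theorem opE_apply (g : SmoothFn m) : opE g = ∑ i, mulCoord i (du i g) := by simp [opE]

theorem opX_of_commute (A : SmoothFn m →ₗ[ℝ] SmoothFn m) (h : ∀ i g, dx i (A g) = A (dx i g))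
    (g : SmoothFn m) : opX (A g) = A (opX g) := by
  simp [opX_apply, h]

theorem dx_opT (i : Fin m) (g : SmoothFn m) : dx i (opT g) = opT (dx i g) := by
  simp [opT_apply, dx_mulCoord, dx_dx i]

theorem dx_opD (i : Fin m) (g : SmoothFn m) : dx i (opD g) = opD (dx i g) := by
  simp [opD_apply, dx_du, dx_dx i]

theorem dx_opR (i : Fin m) (g : SmoothFn m) : dx i (opR g) = opR (dx i g) := by
  simp [opR_apply, dx_mulCoord]

theorem opD_opT (g : SmoothFn m) : opD (opT g) = opT (opD g) + opX g := by
  simp only [opD_apply, opT_apply, opX_apply, map_sum, dx_mulCoord, du_mulCoord, dx_du,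
    Finset.sum_add_distrib, Finset.sum_ite_eq', Finset.mem_univ, if_true]
  rw [Finset.sum_comm]
  congr 1
  refine Finset.sum_congr rfl fun i _ => Finset.sum_congr rfl fun j _ => ?_
  rw [dx_dx]

theorem opD_opR (g : SmoothFn m) : opD (opR g) = opR (opD g) + (2 : ℝ) • opT g := by
  simp only [opD_apply, opT_apply, opR_apply, map_sum, dx_mulCoord, du_mulCoord, map_add,
    apply_ite (mulCoord _), map_zero,
    Finset.sum_add_distrib, Finset.sum_ite_eq', Finset.mem_univ, if_true, two_smul]
  rw [Finset.sum_comm]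
  abel

theorem opE_opD (g : SmoothFn m) : opE (opD g) = opD (opE g) - opD g := by
  simp only [opD_apply, opE_apply, map_sum, dx_mulCoord, du_mulCoord, dx_du,
    Finset.sum_add_distrib, Finset.sum_ite_eq', Finset.mem_univ, if_true]
  rw [Finset.sum_comm, add_sub_cancel_right]
  refine Finset.sum_congr rfl fun i _ => Finset.sum_congr rfl fun j _ => ?_
  rw [du_du]

theorem opE_coe (g : SmoothFn m) (p : Evec m × Evec m) :
    (opE g : Evec m × Evec m → ℝ) p = fderiv ℝ g p (0, p.2) := by
  have h : ((0 : Evec m), p.2) = ∑ i, p.2 i • ((0 : Evec m), EuclideanSpace.single i (1 : ℝ)) := by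
    ext j
    · simp [Prod.fst_sum]
    · simp [Prod.snd_sum, Pi.single_apply]
  rw [h, map_sum, opE_apply]
  simp only [map_smul]
  simp [mulCoord_apply, du, dir_apply]

theorem hasDerivAt_smul_snd (g : SmoothFn m) (x u : Evec m) (s : ℝ) :
    HasDerivAt (fun s : ℝ => (g : Evec m × Evec m → ℝ) (x, s • u))
      (fderiv ℝ g (x, s • u) (0, u)) s := by
  have h1 : HasDerivAt (fun s : ℝ => (x, s • u)) ((0 : Evec m), u) s := by
    have := (hasDerivAt_const s x).prodMk ((hasDerivAt_id s).smul_const u)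
    simpa using this
  exact ((differentiable g) (x, s • u)).hasFDerivAt.comp_hasDerivAt s h1

theorem eq_zero_of_opE_eq_neg (g : SmoothFn m) (h : opE g = -g) : g = 0 := by
  ext ⟨x, u⟩
  set φ : ℝ → ℝ := fun s => s * (g : Evec m × Evec m → ℝ) (x, s • u) with hφ
  have hd : ∀ s, HasDerivAt φ 0 s := by
    intro s
    have h1 := (hasDerivAt_id s).mul (hasDerivAt_smul_snd g x u s)
    have h2 : fderiv ℝ g (x, s • u) (0, s • u) = -(g : Evec m × Evec m → ℝ) (x, s • u) := by
      rw [← opE_coe g (x, s • u), h]; rfl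
    have h3 : ((0 : Evec m), s • u) = s • ((0 : Evec m), u) := by simp
    rw [h3, map_smul, smul_eq_mul] at h2
    exact HasDerivAt.congr_deriv (f := φ) h1 (by simp [h2])
  have := is_const_of_deriv_eq_zero (fun s => (hd s).differentiableAt) (fun s => (hd s).deriv) 1 0
  simpa [hφ] using this

theorem opE_of_homogeneous (g : SmoothFn m) (k : ℕ)
    (h : ∀ (c : ℝ) (x u : Evec m), (g : Evec m × Evec m → ℝ) (x, c • u) =
      c ^ k * (g : Evec m × Evec m → ℝ) (x, u)) : opE g = (k : ℝ) • g := by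
  ext ⟨x, u⟩
  have h1 := hasDerivAt_smul_snd g x u 1
  simp only [h, one_smul] at h1 ⊢
  have h2 := ((hasDerivAt_pow k (1 : ℝ)).mul_const ((g : Evec m × Evec m → ℝ) (x, u)))
  rw [opE_coe, h1.unique h2]
  simp

/-- Smooth functions vanishing on `O`. -/
def vanishing (O : Set (Evec m × Evec m)) : Submodule ℝ (SmoothFn m) where
  carrier := {g | ∀ p ∈ O, (g : Evec m × Evec m → ℝ) p = 0}
  add_mem' := fun hf hg p hp => by simp [hf p hp, hg p hp]
  zero_mem' := fun p _ => rfl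
  smul_mem' := fun c g hg p hp => by simp [hg p hp]

theorem dir_mem_vanishing {O : Set (Evec m × Evec m)} (hO : IsOpen O) (v : Evec m × Evec m)
    {g : SmoothFn m} (hg : g ∈ vanishing O) : dir v g ∈ vanishing O := by
  intro p hp
  have : (g : Evec m × Evec m → ℝ) =ᶠ[𝓝 p] fun _ => 0 := by
    filter_upwards [hO.mem_nhds hp] with q hq using hg q hq
  rw [dir_apply, this.fderiv_eq]
  simp

theorem mulCoord_mem_vanishing {O : Set (Evec m × Evec m)} (i : Fin m)
    {g : SmoothFn m} (hg : g ∈ vanishing O) : mulCoord i g ∈ vanishing O := by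
  intro p hp
  rw [mulCoord_apply, hg p hp, mul_zero]

theorem pd1_coe (i : Fin m) (g : SmoothFn m) :
    pd1 i (fun x u => (g : Evec m × Evec m → ℝ) (x, u)) =
      fun x u => (dx i g : Evec m × Evec m → ℝ) (x, u) := by
  ext x u
  have h1 : HasFDerivAt (fun x : Evec m => (x, u)) (ContinuousLinearMap.inl ℝ _ _) x :=
    hasFDerivAt_prodMk_left x u
  have h2 := ((differentiable g) (x, u)).hasFDerivAt.comp x h1
  have h3 : (fun x₁ => (g : Evec m × Evec m → ℝ) (x₁, u)) = g ∘ fun x => (x, u) := rfl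
  rw [pd1, h3, h2.fderiv]
  simp [dx, dir_apply]

theorem pd2_coe (i : Fin m) (g : SmoothFn m) :
    pd2 i (fun x u => (g : Evec m × Evec m → ℝ) (x, u)) =
      fun x u => (du i g : Evec m × Evec m → ℝ) (x, u) := by
  ext x u
  have h1 : HasFDerivAt (fun u : Evec m => (x, u)) (ContinuousLinearMap.inr ℝ _ _) u :=
    hasFDerivAt_prodMk_right x u
  have h2 := ((differentiable g) (x, u)).hasFDerivAt.comp u h1
  have h3 : (fun u₁ => (g : Evec m × Evec m → ℝ) (x, u₁)) = g ∘ fun u => (x, u) := rfl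
  rw [pd2, h3, h2.fderiv]
  simp [du, dir_apply]

theorem lapl_coe (g : SmoothFn m) (u : Evec m) :
    lapl (fun x => (g : Evec m × Evec m → ℝ) (x, u)) =
      fun x => (opX g : Evec m × Evec m → ℝ) (x, u) := by
  have h : ∀ i (g : SmoothFn m), pdv i (fun x => (g : Evec m × Evec m → ℝ) (x, u)) =
      fun x => (dx i g : Evec m × Evec m → ℝ) (x, u) := fun i g => by
    ext x; exact congrFun (congrFun (pd1_coe i g) x) u
  ext x
  simp [lapl, h, opX_apply]

theorem iterate_lapl_coe (n : ℕ) (g : SmoothFn m) (u : Evec m) :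
    lapl^[n] (fun x => (g : Evec m × Evec m → ℝ) (x, u)) =
      fun x => (opX^[n] g : SmoothFn m).1 (x, u) := by
  induction n generalizing g with
  | zero => rfl
  | succ n ih => rw [Function.iterate_succ_apply, Function.iterate_succ_apply, lapl_coe, ih]

theorem Dk_coe (k : ℕ) (g : SmoothFn m) (x u : Evec m) :
    Dk m k (fun x u => (g : Evec m × Evec m → ℝ) (x, u)) x u =
      (opX g).1 (x, u) - (4 / ((m : ℝ) + 2 * k - 2)) * (opT (opD g)).1 (x, u)
      + (4 / (((m : ℝ) + 2 * k - 2) * ((m : ℝ) + 2 * k - 4))) * (opR (opD (opD g))).1 (x, u) := by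
  have hu : ‖u‖ ^ 2 = ∑ i, u i * u i := by
    rw [EuclideanSpace.norm_sq_eq]
    exact Finset.sum_congr rfl fun i _ => by rw [Real.norm_eq_abs, sq_abs, sq]
  have e1 : (opT (opD g)).1 (x, u) =
      ∑ i, ∑ j, u i * (dx i (du j (dx j g)) : Evec m × Evec m → ℝ) (x, u) := by
    simp [opT_apply, opD_apply, mulCoord_apply]
    exact Finset.sum_comm
  have e2 : (opR (opD (opD g))).1 (x, u) =
      ‖u‖ ^ 2 * ∑ i, ∑ j, (du i (dx i (du j (dx j g))) : Evec m × Evec m → ℝ) (x, u) := by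
    rw [hu, Finset.sum_mul]
    have : ∀ g : SmoothFn m, (opR g).1 (x, u) = ∑ i, u i * u i * g.1 (x, u) := fun g => by
      simp [opR_apply, mulCoord_apply, mul_assoc]
    rw [this]
    simp only [opD_apply, map_sum]
    rw [Finset.sum_comm]
    simp
  rw [e1, e2, opX_apply]
  simp only [Dk, pd1_coe, pd2_coe]
  simp
  ring

theorem polyharmonic_of_Dk_eq_zero (hm : 4 < m) (k : ℕ) (g : SmoothFn m) {U : Set (Evec m)}
    (hU : IsOpen U)
    (hg : ∀ (c : ℝ) (x u : Evec m), (g : Evec m × Evec m → ℝ) (x, c • u) =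
      c ^ k * (g : Evec m × Evec m → ℝ) (x, u))
    (hD : ∀ x ∈ U, ∀ u ∈ ball (0 : Evec m) 1,
      Dk m k (fun x u => (g : Evec m × Evec m → ℝ) (x, u)) x u = 0)
    {x u : Evec m} (hx : x ∈ U) (hu : u ∈ ball (0 : Evec m) 1) :
    lapl^[k + 1] (fun x => (g : Evec m × Evec m → ℝ) (x, u)) x = 0 := by
  have hm' : (4 : ℝ) < m := by exact_mod_cast hm
  have hk : (0 : ℝ) ≤ k := k.cast_nonneg
  set O : Set (Evec m × Evec m) := U ×ˢ ball (0 : Evec m) 1 with hO'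
  have hO : IsOpen O := hU.prod isOpen_ball
  have h1 : (0 : ℝ) < m + 2 * k - 2 := by linarith
  have h2 : (0 : ℝ) < m + 2 * k - 4 := by linarith
  have hX : ∀ i, ∀ g ∈ vanishing O, dx i g ∈ vanishing O :=
    fun i g hg => dir_mem_vanishing hO _ hg
  have hV : ∀ i, ∀ g ∈ vanishing O, du i g ∈ vanishing O :=
    fun i g hg => dir_mem_vanishing hO _ hg
  have hM : ∀ i, ∀ g ∈ vanishing O, mulCoord i g ∈ vanishing O :=
    fun i g hg => mulCoord_mem_vanishing i hg
  have key := iterate_mem_of_bosonic (vanishing O) opT opD opR opX opE opD_opT opD_opR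
    (opX_of_commute _ dx_opT) (opX_of_commute _ dx_opD) (opX_of_commute _ dx_opR) opE_opD
    eq_zero_of_opE_eq_neg
    (fun g hg => by
      rw [opT_apply]; exact Submodule.sum_mem _ fun i _ => hM i _ (hX i _ hg))
    (fun g hg => by
      rw [opD_apply]; exact Submodule.sum_mem _ fun i _ => hV i _ (hX i _ hg))
    (fun g hg => by
      rw [opR_apply]; exact Submodule.sum_mem _ fun i _ => hM i _ (hM i _ hg))
    (fun g hg => by
      rw [opX_apply]; exact Submodule.sum_mem _ fun i _ => hX i _ (hX i _ hg))
    m hm' k ((m + 2 * k - 2) / 4) g (by nlinarith) (opE_of_homogeneous g k hg) (by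
      rintro ⟨y, v⟩ ⟨hy, hv⟩
      have := hD y hy v hv
      rw [Dk_coe] at this
      simp only [Submodule.coe_sub, Submodule.coe_smul, Pi.sub_apply, Pi.smul_apply, smul_eq_mul]
      field_simp at this ⊢
      linarith)
  rw [iterate_lapl_coe]
  exact key (x, u) ⟨hx, hu⟩

end SmoothFn

theorem contDiff_pdv {m : ℕ} {G : Evec m → ℝ} (hG : ContDiff ℝ ∞ G) (i : Fin m) :
    ContDiff ℝ ∞ (pdv i G) :=
  (hG.fderiv_right (m := ∞) (by simp)).clm_apply contDiff_const

theorem contDiff_lapl {m : ℕ} {G : Evec m → ℝ} (hG : ContDiff ℝ ∞ G) :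
    ContDiff ℝ ∞ (lapl G) :=
  ContDiff.sum fun i _ => contDiff_pdv (contDiff_pdv hG i) i

theorem contDiff_radial {m : ℕ} {h : ℝ → ℝ} (hh : ContDiff ℝ ∞ h) :
    ContDiff ℝ ∞ (fun y : Evec m => h (‖y‖ ^ 2)) :=
  hh.comp (contDiff_norm_sq ℝ)

theorem hasCompactSupport_radial {m : ℕ} {h : ℝ → ℝ} (h1 : ∀ r, 1 ≤ r → h r = 0) :
    HasCompactSupport (fun y : Evec m => h (‖y‖ ^ 2)) := by
  refine HasCompactSupport.intro (isCompact_closedBall (0 : Evec m) 1) fun y hy => h1 _ ?_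
  rw [mem_closedBall_zero_iff, not_le] at hy
  exact one_le_pow₀ hy.le

theorem fderiv_apply_eq_sum_pdv {m : ℕ} (G : Evec m → ℝ) (z y : Evec m) :
    fderiv ℝ G z y = ∑ i, y i * pdv i G z := by
  have h : y = ∑ i, y i • EuclideanSpace.single i (1 : ℝ) := by
    ext j
    simp [Pi.single_apply]
  conv_lhs => rw [h]
  simp [map_sum, map_smul, pdv]

theorem hasDerivAt_radialMean {m : ℕ} {h H : ℝ → ℝ} (hh : ContDiff ℝ ∞ h) (hH : ContDiff ℝ ∞ H)
    (hHh : ∀ r, HasDerivAt H (h r) r) (h1 : ∀ r, 1 ≤ r → h r = 0) (H1 : ∀ r, 1 ≤ r → H r = 0)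
    {G : Evec m → ℝ} (hG : ContDiff ℝ ∞ G) (x : Evec m) (s : ℝ) :
    HasDerivAt (fun s : ℝ => ∫ y, h (‖y‖ ^ 2) * G (x + s • y))
      (-(s / 2) * ∫ y, H (‖y‖ ^ 2) * lapl G (x + s • y)) s := by
  have hhr := (contDiff_radial (m := m) hh)
  have hHr := (contDiff_radial (m := m) hH)
  have hhc := hasCompactSupport_radial (m := m) h1
  have hHc := hasCompactSupport_radial (m := m) H1
  have hGc := hG.continuous
  have hG'c : Continuous (fderiv ℝ G) := hG.continuous_fderiv (by simp)
  have hline : ∀ (y : Evec m) (t : ℝ), HasDerivAt (fun t : ℝ => G (x + t • y))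
      (fderiv ℝ G (x + t • y) y) t := by
    intro y t
    have h2 : HasDerivAt (fun t : ℝ => x + t • y) y t := by
      simpa using ((hasDerivAt_id t).smul_const y).const_add x
    exact (hG.differentiable (by simp) _).hasFDerivAt.comp_hasDerivAt t h2
  have hcont : Continuous fun p : ℝ × Evec m =>
      h (‖p.2‖ ^ 2) * fderiv ℝ G (x + p.1 • p.2) p.2 := by
    have := hhr.continuous
    fun_prop
  obtain ⟨C, hC⟩ := ((isCompact_closedBall s 1).prod
    (isCompact_closedBall (0 : Evec m) 1)).exists_bound_of_continuousOn hcont.continuousOn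
  have key := (hasDerivAt_integral_of_dominated_loc_of_deriv_le (μ := (volume : Measure (Evec m)))
    (F := fun t y => h (‖y‖ ^ 2) * G (x + t • y))
    (F' := fun t y => h (‖y‖ ^ 2) * fderiv ℝ G (x + t • y) y)
    (bound := (closedBall (0 : Evec m) 1).indicator fun _ => C)
    (x₀ := s) (ball_mem_nhds s one_pos)
    (Eventually.of_forall fun t => by
      have := hhr.continuous
      exact Continuous.aestronglyMeasurable (by fun_prop))
    (by
      have := hhr.continuous
      exact Continuous.integrable_of_hasCompactSupport (by fun_prop) hhc.mul_right)
    (by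
      have := hhr.continuous
      exact Continuous.aestronglyMeasurable (by fun_prop))
    (Eventually.of_forall fun y t ht => by
      by_cases hy : y ∈ closedBall (0 : Evec m) 1
      · rw [Set.indicator_of_mem hy]
        exact hC (t, y) ⟨ball_subset_closedBall ht, hy⟩
      · rw [Set.indicator_of_notMem hy]
        rw [mem_closedBall_zero_iff, not_le] at hy
        rw [h1 _ (one_le_pow₀ hy.le)]
        simp)
    ((integrable_indicator_iff measurableSet_closedBall).2
      (integrableOn_const (isCompact_closedBall _ _).measure_lt_top.ne))
    (Eventually.of_forall fun y t _ => (hline y t).const_mul _)).2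
  refine key.congr_deriv ?_
  have hψ : ∀ (y : Evec m) i, fderiv ℝ (fun y : Evec m => H (‖y‖ ^ 2) / 2) y
      (EuclideanSpace.single i 1) = h (‖y‖ ^ 2) * y i := by
    intro y i
    have h2 : HasFDerivAt (fun y : Evec m => ‖y‖ ^ 2) (2 • innerSL ℝ y) y :=
      (hasStrictFDerivAt_norm_sq y).hasFDerivAt
    have h3 := ((hHh (‖y‖ ^ 2)).comp_hasFDerivAt y h2).mul_const (2⁻¹ : ℝ)
    have h4 : (fun y : Evec m => H (‖y‖ ^ 2) / 2) =
      fun y => (H ∘ fun y : Evec m => ‖y‖ ^ 2) y * 2⁻¹ := by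
      ext y; simp [div_eq_mul_inv]
    rw [h4, h3.fderiv]
    simp [EuclideanSpace.inner_single_right]
    ring
  have hGi : ∀ (i : Fin m) (y : Evec m), fderiv ℝ (fun y => pdv i G (x + s • y)) y
      (EuclideanSpace.single i 1) = s * pdv i (pdv i G) (x + s • y) := by
    intro i y
    have h2 : HasFDerivAt (fun y : Evec m => x + s • y) (s • ContinuousLinearMap.id ℝ _) y :=
      ((hasFDerivAt_id y).const_smul s).const_add x
    have h3 := ((contDiff_pdv hG i).differentiable (by simp) (x + s • y)).hasFDerivAt.comp y h2
    have h4 : (fun y => pdv i G (x + s • y)) = pdv i G ∘ fun y => x + s • y := rfl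
    rw [h4, h3.fderiv]
    simp [pdv]
  have hparts : ∀ i : Fin m, ∫ y, pdv i G (x + s • y) * (h (‖y‖ ^ 2) * y i) =
      - ∫ y, s * pdv i (pdv i G) (x + s • y) * (H (‖y‖ ^ 2) / 2) := by
    intro i
    have c1 := (contDiff_pdv hG i).continuous
    have c2 := (contDiff_pdv (contDiff_pdv hG i) i).continuous
    have c3 := hHr.continuous
    have c4 := hhr.continuous
    have hH2 : HasCompactSupport (fun y : Evec m => H (‖y‖ ^ 2) / 2) := by
      simp only [div_eq_mul_inv]
      exact hHc.mul_right (f' := fun _ => (2⁻¹ : ℝ))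
    have := integral_mul_fderiv_eq_neg_fderiv_mul_of_integrable
      (μ := (volume : Measure (Evec m))) (v := EuclideanSpace.single i 1)
      (f := fun y => pdv i G (x + s • y)) (g := fun y : Evec m => H (‖y‖ ^ 2) / 2)
      (by
        simp only [hGi]
        exact Continuous.integrable_of_hasCompactSupport (by fun_prop) hH2.mul_left)
      (by
        simp only [hψ]
        exact Continuous.integrable_of_hasCompactSupport (by fun_prop) hhc.mul_right.mul_left)
      (Continuous.integrable_of_hasCompactSupport (by fun_prop) hH2.mul_left)
      (fun y _ => by
        have := (contDiff_pdv hG i).differentiable (by simp)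
        fun_prop)
      (fun y _ => by
        have := hHr.differentiable (by simp) y
        simpa only [div_eq_mul_inv] using this.mul_const (2⁻¹ : ℝ))
    simpa only [hψ, hGi] using this
  have e1 : ∀ y : Evec m, h (‖y‖ ^ 2) * fderiv ℝ G (x + s • y) y =
      ∑ i, pdv i G (x + s • y) * (h (‖y‖ ^ 2) * y i) := by
    intro y
    rw [fderiv_apply_eq_sum_pdv, Finset.mul_sum]
    exact Finset.sum_congr rfl fun i _ => by ring
  have e2 : ∀ y : Evec m, H (‖y‖ ^ 2) * lapl G (x + s • y) =
      ∑ i, H (‖y‖ ^ 2) * pdv i (pdv i G) (x + s • y) := by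
    intro y
    rw [lapl, Finset.mul_sum]
  simp only [e1, e2]
  rw [integral_finsetSum, integral_finsetSum, Finset.mul_sum]
  · refine Finset.sum_congr rfl fun i _ => ?_
    rw [hparts i, ← integral_neg, ← integral_const_mul]
    congr 1
    ext y
    ring
  · intro i _
    have c2 := (contDiff_pdv (contDiff_pdv hG i) i).continuous
    have c3 := hHr.continuous
    exact Continuous.integrable_of_hasCompactSupport (by fun_prop) hHc.mul_right
  · intro i _
    have c1 := (contDiff_pdv hG i).continuous
    have c4 := hhr.continuous
    exact Continuous.integrable_of_hasCompactSupport (by fun_prop) hhc.mul_right.mul_left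

theorem exists_antideriv {h : ℝ → ℝ} (hh : ContDiff ℝ ∞ h) (h1 : ∀ r, 1 ≤ r → h r = 0) :
    ∃ H : ℝ → ℝ, ContDiff ℝ ∞ H ∧ (∀ r, HasDerivAt H (h r) r) ∧ ∀ r, 1 ≤ r → H r = 0 := by
  have hd : ∀ r, HasDerivAt (fun r => ∫ t in (1 : ℝ)..r, h t) (h r) r := fun r =>
    (hh.continuous.integral_hasStrictDerivAt 1 r).hasDerivAt
  refine ⟨fun r => ∫ t in (1 : ℝ)..r, h t, ?_, hd, ?_⟩
  · rw [contDiff_infty_iff_deriv]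
    refine ⟨fun r => (hd r).differentiableAt, ?_⟩
    rwa [show deriv (fun r => ∫ t in (1 : ℝ)..r, h t) = h from funext fun r => (hd r).deriv]
  · intro r hr
    beta_reduce
    rw [intervalIntegral.integral_congr (g := fun _ => (0 : ℝ))]
    · simp
    · intro t ht
      rw [Set.uIcc_of_le hr] at ht
      exact h1 t ht.1

theorem radialMean_eq_sum {m : ℕ} (x : Evec m) (δ : ℝ) (n : ℕ) :
    ∀ {h : ℝ → ℝ} {G : Evec m → ℝ}, ContDiff ℝ ∞ h → (∀ r, 1 ≤ r → h r = 0) → ContDiff ℝ ∞ G →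
      (∀ y ∈ closedBall x δ, lapl^[n] G y = 0) →
      ∃ c : ℕ → ℝ, ∀ s ∈ Set.Icc 0 δ,
        ∫ y, h (‖y‖ ^ 2) * G (x + s • y) = ∑ i ∈ Finset.range n, c i * (s ^ 2) ^ i := by
  induction n with
  | zero =>
    intro h G hh h1 hG hx
    refine ⟨0, fun s hs => ?_⟩
    simp only [Finset.range_zero, Finset.sum_empty]
    refine integral_eq_zero_of_ae (Eventually.of_forall fun y => ?_)
    by_cases hy : ‖y‖ ≤ 1
    · have : G (x + s • y) = 0 := by
        refine hx _ ?_
        rw [mem_closedBall, dist_eq_norm, add_sub_cancel_left, norm_smul, Real.norm_of_nonneg hs.1]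
        exact (mul_le_of_le_one_right hs.1 hy).trans hs.2
      simp [this]
    · have : h (‖y‖ ^ 2) = 0 := h1 _ (one_le_pow₀ (not_le.1 hy).le)
      simp [this]
  | succ n ih =>
    intro h G hh h1 hG hx
    obtain ⟨H, hH, hHh, H1⟩ := exists_antideriv hh h1
    obtain ⟨c, hc⟩ := ih hH H1 (contDiff_lapl hG) (by simpa using hx)
    have hM := hasDerivAt_radialMean hh hH hHh h1 H1 hG x
    set M : ℝ → ℝ := fun s : ℝ => ∫ y, h (‖y‖ ^ 2) * G (x + s • y) with hMdef
    set c' : ℕ → ℝ := fun i => Nat.casesOn i (M 0) fun i => -(c i / (4 * (i + 1)))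
    refine ⟨c', fun s hs => ?_⟩
    have hP : ∀ s, HasDerivAt (fun s : ℝ => ∑ i ∈ Finset.range n, c' (i + 1) * (s ^ 2) ^ (i + 1))
        (-(s / 2) * ∑ i ∈ Finset.range n, c i * (s ^ 2) ^ i) s := by
      intro s
      rw [Finset.mul_sum]
      refine HasDerivAt.fun_sum fun i _ => ?_
      have h2 := (((hasDerivAt_pow 2 s).pow (i + 1)).const_mul (c' (i + 1)))
      refine h2.congr_deriv ?_
      simp only [c']
      push_cast
      have : (i : ℝ) + 1 ≠ 0 := by positivity
      field_simp
      simp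
      ring
    have hdiff : ∀ t ∈ Set.Icc 0 δ, HasDerivWithinAt
        (fun s => M s - ∑ i ∈ Finset.range n, c' (i + 1) * (s ^ 2) ^ (i + 1)) 0
          (Set.Icc 0 δ) t := by
      intro t ht
      refine (((hM t).sub (hP t)).congr_deriv ?_).hasDerivWithinAt
      rw [hc t ht, sub_self]
    have hconst := (convex_Icc (0 : ℝ) δ).norm_image_sub_le_of_norm_hasDerivWithin_le (C := 0)
      hdiff (fun t _ => by simp) (⟨le_rfl, hs.1.trans hs.2⟩ : (0 : ℝ) ∈ Set.Icc 0 δ) hs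
    rw [zero_mul, norm_le_zero_iff, sub_eq_zero] at hconst
    rw [Finset.sum_range_succ']
    simp only [c'] at hconst ⊢
    simp at hconst ⊢
    simp only [hMdef] at hconst ⊢
    linarith

theorem exists_interpolation_weights (n : ℕ) {r : ℕ → ℝ} (hr : Function.Injective r) :
    ∃ w : ℕ → ℝ, ∀ i < n, ∑ l ∈ Finset.range n, w l * r l ^ i = if i = 0 then 1 else 0 := by
  refine ⟨fun l => Polynomial.eval 0 (Lagrange.basis (Finset.range n) r l), fun i hi => ?_⟩
  have h := Lagrange.eq_interpolate (s := Finset.range n) (v := r) (f := Polynomial.X ^ i)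
    hr.injOn (by
      rw [Polynomial.degree_X_pow, Finset.card_range]
      exact_mod_cast hi)
  have h2 := congrArg (Polynomial.eval 0) h
  rw [Lagrange.interpolate_apply, Polynomial.eval_finsetSum] at h2
  simp only [Polynomial.eval_mul, Polynomial.eval_C, Polynomial.eval_pow, Polynomial.eval_X] at h2
  rw [zero_pow_eq] at h2
  rw [h2]
  exact Finset.sum_congr rfl fun l _ => mul_comm _ _

/-- A smooth compactly supported kernel reproducing polyharmonic functions. -/
theorem exists_polyharmonic_kernel (m n : ℕ) {δ : ℝ} (hδ : 0 < δ) :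
    ∃ κ : Evec m → ℝ, ContDiff ℝ ∞ κ ∧ (∀ y, δ ≤ ‖y‖ → κ y = 0) ∧ (∀ y, κ (-y) = κ y) ∧
      ∀ (G : Evec m → ℝ) (x : Evec m), ContDiff ℝ ∞ G →
        (∀ y ∈ closedBall x δ, lapl^[n] G y = 0) → G x = ∫ y, κ y * G (x + y) := by
  set h : ℝ → ℝ := fun r => Real.smoothTransition (1 - r) with hdef
  have hh : ContDiff ℝ ∞ h :=
    Real.smoothTransition.contDiff.comp (contDiff_const.sub contDiff_id)
  have h1 : ∀ r, 1 ≤ r → h r = 0 := fun r hr =>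
    Real.smoothTransition.zero_of_nonpos (by linarith)
  have hI : 0 < ∫ y : Evec m, h (‖y‖ ^ 2) := by
    have hc := (contDiff_radial (m := m) hh).continuous
    refine hc.integral_pos_of_hasCompactSupport_nonneg_nonzero
      (hasCompactSupport_radial h1) (fun y => Real.smoothTransition.nonneg _) (x := 0) ?_
    simp [hdef]
  set s : ℕ → ℝ := fun l => δ / (l + 1) with hs
  have hspos : ∀ l, 0 < s l := fun l => by positivity
  have hsle : ∀ l, s l ≤ δ := fun l => by
    refine div_le_self hδ.le ?_
    have : (0 : ℝ) ≤ l := l.cast_nonneg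
    linarith
  have hinj : Function.Injective fun l => s l ^ 2 := by
    intro a b hab
    have h2 : s a = s b := (pow_left_inj₀ (hspos a).le (hspos b).le two_ne_zero).1 hab
    simp only [hs] at h2
    have ha : (a : ℝ) + 1 ≠ 0 := by positivity
    have hb : (b : ℝ) + 1 ≠ 0 := by positivity
    field_simp at h2
    have : (a : ℝ) = b := by linarith
    exact_mod_cast this
  obtain ⟨w, hw⟩ := exists_interpolation_weights n hinj
  set I : ℝ := ∫ y : Evec m, h (‖y‖ ^ 2) with hIdef
  refine ⟨fun y => ∑ l ∈ Finset.range n, w l / I * ((s l ^ m)⁻¹ * h (‖(s l)⁻¹ • y‖ ^ 2)),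
    ?_, ?_, ?_, ?_⟩
  · refine ContDiff.sum fun l _ => contDiff_const.mul (contDiff_const.mul ?_)
    exact (contDiff_radial hh).comp (contDiff_id.const_smul _)
  · intro y hy
    refine Finset.sum_eq_zero fun l _ => ?_
    rw [h1, mul_zero, mul_zero]
    refine one_le_pow₀ ?_
    rw [norm_smul, Real.norm_of_nonneg (inv_nonneg.2 (hspos l).le), inv_mul_eq_div,
      one_le_div (hspos l)]
    exact (hsle l).trans hy
  · intro y; simp
  · intro G x hG hx
    obtain ⟨c, hc⟩ := radialMean_eq_sum x δ n hh h1 hG hx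
    have hscale : ∀ l, ∫ y, (s l ^ m)⁻¹ * h (‖(s l)⁻¹ • y‖ ^ 2) * G (x + y) =
        ∫ y, h (‖y‖ ^ 2) * G (x + s l • y) := by
      intro l
      have := Measure.integral_comp_smul (volume : Measure (Evec m))
        (fun y => h (‖(s l)⁻¹ • y‖ ^ 2) * G (x + y)) (s l)
      simp only [smul_smul, inv_mul_cancel₀ (hspos l).ne', one_smul] at this
      rw [this, finrank_euclideanSpace_fin, abs_of_pos (by have := hspos l; positivity),
        ← integral_smul]
      simp [mul_assoc]
    have h_int : ∀ l, Integrable fun y => w l / I * ((s l ^ m)⁻¹ * h (‖(s l)⁻¹ • y‖ ^ 2)) *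
        G (x + y) := by
      intro l
      have c1 : Continuous fun y : Evec m => h (‖(s l)⁻¹ • y‖ ^ 2) :=
        (contDiff_radial (m := m) hh).continuous.comp (continuous_const_smul _)
      have c2 := hG.continuous
      refine Continuous.integrable_of_hasCompactSupport (by fun_prop) ?_
      refine HasCompactSupport.mul_right (HasCompactSupport.mul_left (HasCompactSupport.mul_left ?_))
      exact (hasCompactSupport_radial (m := m) h1).comp_smul (inv_ne_zero (hspos l).ne')
    have hsum : ∑ l ∈ Finset.range n, w l * ∫ y, h (‖y‖ ^ 2) * G (x + s l • y) =
        ∑ i ∈ Finset.range n, c i * if i = 0 then 1 else 0 := by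
      have : ∀ l ∈ Finset.range n, w l * ∫ y, h (‖y‖ ^ 2) * G (x + s l • y) =
          ∑ i ∈ Finset.range n, c i * (w l * (s l ^ 2) ^ i) := by
        intro l _
        rw [hc (s l) ⟨(hspos l).le, hsle l⟩, Finset.mul_sum]
        exact Finset.sum_congr rfl fun i _ => by ring
      rw [Finset.sum_congr rfl this, Finset.sum_comm]
      refine Finset.sum_congr rfl fun i hi => ?_
      rw [← Finset.mul_sum, hw i (Finset.mem_range.1 hi)]
    have hzero : G x * I = ∑ i ∈ Finset.range n, c i * if i = 0 then 1 else 0 := by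
      have := hc 0 ⟨le_rfl, hδ.le⟩
      simp only [zero_smul, add_zero, integral_mul_const] at this
      rw [hIdef, mul_comm, this]
      exact Finset.sum_congr rfl fun i _ => by simp [zero_pow_eq]
    simp only [Finset.sum_mul]
    rw [integral_finsetSum _ fun l _ => h_int l]
    have : ∀ l, ∫ y, w l / I * ((s l ^ m)⁻¹ * h (‖(s l)⁻¹ • y‖ ^ 2)) * G (x + y) =
        (w l * ∫ y, h (‖y‖ ^ 2) * G (x + s l • y)) / I := by
      intro l
      rw [← hscale l]
      simp only [mul_assoc (w l / I)]
      rw [integral_const_mul]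
      ring
    simp only [this]
    rw [← Finset.sum_div, hsum, ← hzero, mul_div_cancel_right₀ _ hI.ne']

theorem exists_finite_sampling {X : Type*} (V : Submodule ℝ (X → ℝ)) [FiniteDimensional ℝ V] :
    ∃ (S : Finset X) (e : S → X → ℝ), (∀ s, e s ∈ V) ∧
      ∀ v ∈ V, ∀ x, v x = ∑ s : S, v s * e s x := by
  classical
  let r : ∀ S : Finset X, V →ₗ[ℝ] (S → ℝ) := fun S =>
    (LinearMap.funLeft ℝ ℝ ((↑) : S → X)).comp V.subtype
  obtain ⟨K, ⟨S, rfl⟩, hS⟩ := IsArtinian.set_has_minimal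
    (Set.range fun S => LinearMap.ker (r S)) ⟨_, ∅, rfl⟩
  have hinj : LinearMap.ker (r S) = ⊥ := by
    refine (Submodule.eq_bot_iff _).2 fun v hv => Subtype.ext (funext fun x => ?_)
    have hle : LinearMap.ker (r (insert x S)) ≤ LinearMap.ker (r S) := fun w hw => by
      rw [LinearMap.mem_ker] at hw ⊢
      funext s
      exact congrFun hw ⟨s, Finset.mem_insert_of_mem s.2⟩
    have heq := hle.eq_of_not_lt (hS _ ⟨_, rfl⟩)
    rw [← heq, LinearMap.mem_ker] at hv
    exact congrFun hv ⟨x, Finset.mem_insert_self x S⟩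
  obtain ⟨g, hg⟩ := (r S).exists_leftInverse_of_injective hinj
  refine ⟨S, fun s => (g (Pi.single s 1) : V), fun s => (g _).2, fun v hv x => ?_⟩
  have h1 : g (r S ⟨v, hv⟩) = ⟨v, hv⟩ := LinearMap.congr_fun hg _
  have h2 : r S ⟨v, hv⟩ = ∑ s : S, v s • Pi.single s (1 : ℝ) := by
    funext s
    simp [r, LinearMap.funLeft_apply, Finset.sum_apply, Pi.single_apply]
  rw [h2, map_sum] at h1
  have h3 := congrFun (congrArg Subtype.val h1) x
  simp only [map_smul, Submodule.coe_sum, Submodule.coe_smul, Finset.sum_apply, Pi.smul_apply,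
    smul_eq_mul] at h3
  exact h3.symm

theorem IsHk.contDiff {m k : ℕ} {p : Evec m → ℝ} (hp : IsHk m k p) : ContDiff ℝ ∞ p := by
  obtain ⟨⟨P, hP⟩, -⟩ := hp
  rw [show p = _ from funext hP]
  simp only [MvPolynomial.eval_eq]
  fun_prop

theorem pdv_add {m : ℕ} (i : Fin m) {f g : Evec m → ℝ} (hf : Differentiable ℝ f)
    (hg : Differentiable ℝ g) : pdv i (f + g) = pdv i f + pdv i g := by
  funext x
  simp [pdv, fderiv_add (hf x) (hg x)]

theorem pdv_const_smul {m : ℕ} (i : Fin m) (c : ℝ) (f : Evec m → ℝ) :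
    pdv i (c • f) = c • pdv i f := by
  funext x
  simp [pdv, fderiv_const_smul_field]

/-- The space `ℋ_k` as a space of functions. -/
def hkSpace (m k : ℕ) : Submodule ℝ (Evec m → ℝ) where
  carrier := {p | IsHk m k p}
  zero_mem' := by
    refine ⟨⟨0, by simp⟩, by simp, fun x => ?_⟩
    have h : ∀ i : Fin m, pdv i (0 : Evec m → ℝ) = 0 := fun i => by
      funext x; simp [pdv]
    simp [lapl, h]
  add_mem' := by
    intro p q hp hq
    have hp' := IsHk.contDiff hp
    have hq' := IsHk.contDiff hq
    obtain ⟨⟨P, hP⟩, hp1, hp2⟩ := hp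
    obtain ⟨⟨Q, hQ⟩, hq1, hq2⟩ := hq
    refine ⟨⟨P + Q, fun x => by simp [hP, hQ]⟩, fun c x => by simp [hp1, hq1, mul_add], ?_⟩
    intro x
    have := hp2 x
    have := hq2 x
    simp only [lapl] at *
    simp only [pdv_add _ (hp'.differentiable (by simp)) (hq'.differentiable (by simp)),
      pdv_add _ ((contDiff_pdv hp' _).differentiable (by simp))
        ((contDiff_pdv hq' _).differentiable (by simp)), Pi.add_apply, Finset.sum_add_distrib]
    linarith
  smul_mem' := by
    intro c p hp
    obtain ⟨⟨P, hP⟩, hp1, hp2⟩ := hp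
    refine ⟨⟨MvPolynomial.C c * P, fun x => by simp [hP]⟩, fun a x => ?_, ?_⟩
    · simp only [Pi.smul_apply, hp1, smul_eq_mul]; ring
    intro x
    have := hp2 x
    simp only [lapl] at *
    simp [pdv_const_smul, ← Finset.mul_sum, this]

theorem IsHk.exists_totalDegree_le {m k : ℕ} {p : Evec m → ℝ} (hp : IsHk m k p) :
    ∃ P : MvPolynomial (Fin m) ℝ, P.totalDegree ≤ k ∧
      ∀ x : Evec m, p x = MvPolynomial.eval (fun i => x i) P := by
  obtain ⟨⟨P, hP⟩, hp1, -⟩ := hp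
  refine ⟨MvPolynomial.homogeneousComponent k P,
    (MvPolynomial.homogeneousComponent_isHomogeneous k P).totalDegree_le, fun x => ?_⟩
  have hQ : ∑ d ∈ P.support, Polynomial.monomial d.degree (P.coeff d * ∏ i, x i ^ d i) =
      Polynomial.monomial k (p x) := by
    refine Polynomial.funext fun c => ?_
    rw [Polynomial.eval_finsetSum]
    simp only [Polynomial.eval_monomial]
    rw [mul_comm (p x), ← hp1 c x, hP, MvPolynomial.eval_eq']
    refine Finset.sum_congr rfl fun d _ => ?_
    simp only [PiLp.smul_apply, smul_eq_mul, mul_pow, Finset.prod_mul_distrib,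
      Finset.prod_pow_eq_pow_sum, Finsupp.degree_eq_sum]
    ring
  have hc := congrArg (fun Q => Polynomial.coeff Q k) hQ
  simp only [Polynomial.finsetSum_coeff, Polynomial.coeff_monomial, if_true] at hc
  rw [← hc, MvPolynomial.homogeneousComponent_apply, map_sum, Finset.sum_filter]
  refine Finset.sum_congr rfl fun d _ => ?_
  simp [MvPolynomial.eval_monomial, Finsupp.prod_fintype]

instance finiteDimensional_hkSpace (m k : ℕ) : FiniteDimensional ℝ (hkSpace m k) := by
  let ev : MvPolynomial.restrictTotalDegree (Fin m) ℝ k →ₗ[ℝ] (Evec m → ℝ) :=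
    { toFun := fun P x => MvPolynomial.eval (fun i => x i) (P : MvPolynomial (Fin m) ℝ)
      map_add' := fun P Q => by funext x; simp
      map_smul' := fun c P => by funext x; simp }
  have hle : hkSpace m k ≤ LinearMap.range ev := by
    intro p hp
    obtain ⟨P, hP, hp⟩ := IsHk.exists_totalDegree_le hp
    exact ⟨⟨P, (MvPolynomial.mem_restrictTotalDegree _ _ _).2 hP⟩, funext fun x => (hp x).symm⟩
  exact Submodule.finiteDimensional_of_le hle

/-- Elements of `ℋ_k` are determined linearly by finitely many values in the unit ball. -/
theorem exists_hk_sampling (m k : ℕ) :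
    ∃ (N : ℕ) (w : Fin N → Evec m) (e : Fin N → Evec m → ℝ), (∀ l, w l ∈ ball (0 : Evec m) 1) ∧
      (∀ l, IsHk m k (e l)) ∧ ∀ q, IsHk m k q → ∀ u, q u = ∑ l, q (w l) * e l u := by
  obtain ⟨S, e, he, hS⟩ := exists_finite_sampling (hkSpace m k)
  let σ := (S.equivFin).symm
  let R : Fin S.card → ℝ := fun l => ‖(σ l : Evec m)‖ + 1
  have hR : ∀ l, 0 < R l := fun l => by positivity
  refine ⟨S.card, fun l => (R l)⁻¹ • (σ l : Evec m), fun l => (R l) ^ k • e (σ l),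
    fun l => ?_, fun l => (hkSpace m k).smul_mem _ (he _), fun q hq u => ?_⟩
  · rw [mem_ball_zero_iff, norm_smul, norm_inv, Real.norm_of_nonneg (hR l).le, inv_mul_eq_div,
      div_lt_one (hR l)]
    exact lt_add_one _
  · rw [hS q hq u, ← σ.sum_comp]
    refine Finset.sum_congr rfl fun l _ => ?_
    beta_reduce
    rw [hq.2.1, Pi.smul_apply, smul_eq_mul, inv_pow]
    have := (pow_pos (hR l) k).ne'
    field_simp

/-- Point values of elements of `ℋ_k` are controlled by the mean over the unit ball. -/
theorem exists_hk_bound (m k : ℕ) {u : Evec m} (hu : u ∈ ball (0 : Evec m) 1) :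
    ∃ C : ℝ, 0 ≤ C ∧ ∀ q, IsHk m k q → |q u| ≤ C * ∫ v in ball (0 : Evec m) 1, |q v| := by
  rw [mem_ball_zero_iff] at hu
  obtain ⟨κ, hκ, hκ0, -, hrep⟩ := exists_polyharmonic_kernel m 1 (sub_pos.2 hu)
  have hsupp : ∀ z, z ∉ ball (0 : Evec m) 1 → κ (z - u) = 0 := fun z hz => by
    refine hκ0 _ ?_
    rw [mem_ball_zero_iff, not_lt] at hz
    have := norm_sub_norm_le z u
    linarith
  have hcs : HasCompactSupport κ := by
    refine HasCompactSupport.intro (isCompact_closedBall (0 : Evec m) (1 - ‖u‖)) fun y hy => hκ0 y ?_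
    simpa using (not_le.1 (fun h => hy (mem_closedBall_zero_iff.2 h))).le
  obtain ⟨C, hC⟩ := hcs.exists_bound_of_continuous hκ.continuous
  refine ⟨C, (norm_nonneg _).trans (hC 0), fun q hq => ?_⟩
  have hqc := hq.contDiff
  have h1 : q u = ∫ v in ball (0 : Evec m) 1, κ (v - u) * q v := by
    rw [hrep q u hqc (fun y _ => hq.2.2 y), setIntegral_eq_integral_of_forall_compl_eq_zero
      fun z hz => by rw [hsupp z hz, zero_mul]]
    rw [← integral_add_left_eq_self (fun v => κ (v - u) * q v) u]
    simp
  have h_int : IntegrableOn (fun v => |q v|) (ball (0 : Evec m) 1) :=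
    (hqc.continuous.abs.continuousOn.integrableOn_compact
      (isCompact_closedBall (0 : Evec m) 1)).mono_set ball_subset_closedBall
  rw [h1, ← integral_const_mul, ← Real.norm_eq_abs]
  refine norm_integral_le_of_norm_le (h_int.const_mul C) (Eventually.of_forall fun v => ?_)
  rw [norm_mul]
  exact mul_le_mul_of_nonneg_right (hC _) (abs_nonneg _)

theorem ContDiffAt.pdv {m : ℕ} {f : Evec m → ℝ} {x : Evec m} {n n' : WithTop ℕ∞}
    (hf : ContDiffAt ℝ n f x) (h : n' + 1 ≤ n) (i : Fin m) : ContDiffAt ℝ n' (pdv i f) x :=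
  (hf.fderiv_right h).clm_apply contDiffAt_const

theorem Filter.EventuallyEq.pdv {m : ℕ} {f g : Evec m → ℝ} {x : Evec m} (h : f =ᶠ[𝓝 x] g)
    (i : Fin m) : pdv i f =ᶠ[𝓝 x] pdv i g :=
  h.fderiv.fun_comp fun L => L (EuclideanSpace.single i 1)

theorem pd1_tensor {m N : ℕ} {Ω B : Set (Evec m)} (hΩ : IsOpen Ω) {f : Evec m → Evec m → ℝ}
    {a e : Fin N → Evec m → ℝ} (hf : ∀ x ∈ Ω, ∀ u ∈ B, f x u = ∑ l, a l x * e l u)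
    (ha : ∀ l, ∀ x ∈ Ω, DifferentiableAt ℝ (a l) x) (i : Fin m) :
    ∀ x ∈ Ω, ∀ u ∈ B, pd1 i f x u = ∑ l, pdv i (a l) x * e l u := by
  intro x hx u hu
  have h1 : (fun y => f y u) =ᶠ[𝓝 x] fun y => ∑ l, a l y * e l u := by
    filter_upwards [hΩ.mem_nhds hx] with y hy using hf y hy u hu
  have h2 : HasFDerivAt (fun y => ∑ l, a l y * e l u) (∑ l, e l u • fderiv ℝ (a l) x) x :=
    HasFDerivAt.fun_sum fun l _ => (ha l x hx).hasFDerivAt.mul_const (e l u)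
  rw [pd1, h1.fderiv_eq, h2.fderiv]
  simp [pdv, mul_comm]

theorem pd2_tensor {m N : ℕ} {Ω B : Set (Evec m)} (hB : IsOpen B) {f : Evec m → Evec m → ℝ}
    {a e : Fin N → Evec m → ℝ} (hf : ∀ x ∈ Ω, ∀ u ∈ B, f x u = ∑ l, a l x * e l u)
    (he : ∀ l, ContDiff ℝ ∞ (e l)) (i : Fin m) :
    ∀ x ∈ Ω, ∀ u ∈ B, pd2 i f x u = ∑ l, a l x * pdv i (e l) u := by
  intro x hx u hu
  have h1 : (fun y => f x y) =ᶠ[𝓝 u] fun y => ∑ l, a l x * e l y := by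
    filter_upwards [hB.mem_nhds hu] with y hy using hf x hx y hy
  have h2 : HasFDerivAt (fun y => ∑ l, a l x * e l y) (∑ l, a l x • fderiv ℝ (e l) u) u :=
    HasFDerivAt.fun_sum fun l _ =>
      ((he l).differentiable (by simp) u).hasFDerivAt.const_mul (a l x)
  rw [pd2, h1.fderiv_eq, h2.fderiv]
  simp [pdv]

/-- The coefficient of `∂_i ∂_j a` in `𝒟_k (a ⊗ e)`. -/
def bosonicCoeff (m k : ℕ) (e : Evec m → ℝ) (u : Evec m) (i j : Fin m) : ℝ :=
  (if i = j then e u else 0) - (4 / ((m : ℝ) + 2 * k - 2)) * (u i * pdv j e u)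
    + (4 * ‖u‖ ^ 2 / (((m : ℝ) + 2 * k - 2) * ((m : ℝ) + 2 * k - 4))) * pdv i (pdv j e) u

theorem Dk_tensor {m k N : ℕ} {Ω B : Set (Evec m)} (hΩ : IsOpen Ω) (hB : IsOpen B)
    {f : Evec m → Evec m → ℝ} {a e : Fin N → Evec m → ℝ}
    (hf : ∀ x ∈ Ω, ∀ u ∈ B, f x u = ∑ l, a l x * e l u)
    (ha : ∀ l, ∀ x ∈ Ω, ContDiffAt ℝ 2 (a l) x) (he : ∀ l, ContDiff ℝ ∞ (e l))
    {x u : Evec m} (hx : x ∈ Ω) (hu : u ∈ B) :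
    Dk m k f x u = ∑ l, ∑ i, ∑ j, bosonicCoeff m k (e l) u i j * pdv i (pdv j (a l)) x := by
  have ha1 : ∀ l, ∀ x ∈ Ω, DifferentiableAt ℝ (a l) x := fun l x hx =>
    (ha l x hx).differentiableAt (by simp)
  have ha2 : ∀ j l, ∀ x ∈ Ω, DifferentiableAt ℝ (pdv j (a l)) x := fun j l x hx =>
    ((ha l x hx).pdv (n' := 1) (by norm_num) j).differentiableAt (by simp)
  have p1 := fun j => pd1_tensor hΩ hf ha1 j
  have p11 := fun i j => pd1_tensor hΩ (p1 j) (ha2 j) i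
  have p21 := fun j => pd2_tensor hB (p1 j) he j
  have p121 := fun i j => pd1_tensor hΩ (p21 j) (ha2 j) i
  have p2121 := fun i j => pd2_tensor hB (p121 i j) (fun l => contDiff_pdv (he l) j) i
  rw [Dk]
  simp only [p11 _ _ x hx u hu, p121 _ _ x hx u hu, p2121 _ _ x hx u hu]
  simp only [bosonicCoeff, add_mul, sub_mul, Finset.sum_add_distrib, Finset.sum_sub_distrib,
    ite_mul, zero_mul, Finset.sum_ite_eq, Finset.mem_univ, if_true]
  congr 1
  · congr 1
    · rw [Finset.sum_comm]
      exact Finset.sum_congr rfl fun l _ => Finset.sum_congr rfl fun i _ => mul_comm _ _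
    · simp only [Finset.mul_sum]
      rw [Finset.sum_comm_cycle]
      refine Finset.sum_congr rfl fun l _ => Finset.sum_congr rfl fun i _ =>
        Finset.sum_congr rfl fun j _ => by ring
  · simp only [Finset.mul_sum]
    rw [Finset.sum_comm_cycle]
    refine Finset.sum_congr rfl fun l _ => Finset.sum_congr rfl fun i _ =>
      Finset.sum_congr rfl fun j _ => by ring

theorem pdv_convolution {m : ℕ} {f g : Evec m → ℝ} (hf : LocallyIntegrable f volume)
    (hc : HasCompactSupport g) (hg : ContDiff ℝ 1 g) (i : Fin m) :
    pdv i (convolution f g (ContinuousLinearMap.lsmul ℝ ℝ) volume) =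
      convolution f (pdv i g) (ContinuousLinearMap.lsmul ℝ ℝ) volume := by
  funext x
  rw [pdv, (hc.hasFDerivAt_convolution_right _ hf hg x).fderiv,
    convolution_precompR_apply _ hf (hc.fderiv ℝ) (hg.continuous_fderiv (by simp))]
  rfl

theorem C2Hk.eq_sum {m k N : ℕ} {Ω : Set (Evec m)} {F : Evec m → Evec m → ℝ} (hF : C2Hk m k Ω F)
    {w : Fin N → Evec m} {e : Fin N → Evec m → ℝ} (hw : ∀ l, w l ∈ ball (0 : Evec m) 1)
    (hs : ∀ q, IsHk m k q → ∀ u, q u = ∑ l, q (w l) * e l u) :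
    ∀ x ∈ Ω, ∀ u ∈ closedBall (0 : Evec m) 1, F x u = ∑ l, F x (w l) * e l u := by
  intro x hx u hu
  obtain ⟨q, hq, hFq⟩ := hF.2 x hx
  rw [hFq u hu, hs q hq u]
  exact Finset.sum_congr rfl fun l _ => by rw [hFq _ (ball_subset_closedBall (hw l))]

theorem C2Hk.contDiffAt_slice {m k : ℕ} {Ω : Set (Evec m)} (hΩ : IsOpen Ω)
    {F : Evec m → Evec m → ℝ} (hF : C2Hk m k Ω F) {x u : Evec m} (hx : x ∈ Ω)
    (hu : u ∈ ball (0 : Evec m) 1) : ContDiffAt ℝ 2 (fun x => F x u) x := by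
  have h1 := hF.1.contDiffAt ((hΩ.prod isOpen_ball).mem_nhds (Set.mk_mem_prod hx hu))
  exact h1.comp x (contDiffAt_id.prodMk contDiffAt_const)

theorem contDiff_of_forall_tsupport {m : ℕ} {n : WithTop ℕ∞} {f : Evec m → ℝ}
    (h : ∀ x ∈ tsupport f, ContDiffAt ℝ n f x) : ContDiff ℝ n f := by
  refine contDiff_iff_contDiffAt.2 fun x => ?_
  by_cases hx : x ∈ tsupport f
  · exact h x hx
  · exact contDiffAt_const.congr_of_eventuallyEq (notMem_tsupport_iff_eventuallyEq.1 hx)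

/-- Mollifying a finite sum `∑ a_l ⊗ e_l` annihilated by `𝒟_k` on `U` gives a smooth function
annihilated by `𝒟_k` away from the boundary of `U`. -/
theorem sum_bosonicCoeff_convolution_eq_zero {m k N : ℕ} {U : Set (Evec m)}
    {a e : Fin N → Evec m → ℝ} (ha : ∀ l, ContDiff ℝ 2 (a l)) (hc : ∀ l, HasCompactSupport (a l))
    {u : Evec m}
    (hD : ∀ x ∈ U, ∑ l, ∑ i, ∑ j, bosonicCoeff m k (e l) u i j * pdv i (pdv j (a l)) x = 0)
    {ρ : Evec m → ℝ} (hρ : Continuous ρ) {x : Evec m} (hx : ∀ t, ρ t ≠ 0 → x - t ∈ U) :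
    ∑ l, ∑ i, ∑ j, bosonicCoeff m k (e l) u i j *
      pdv i (pdv j (convolution ρ (a l) (ContinuousLinearMap.lsmul ℝ ℝ) volume)) x = 0 := by
  have hc1 : ∀ j l, HasCompactSupport (pdv j (a l)) := fun j l => (hc l).fderiv_apply ℝ _
  have ha1 : ∀ j l, ContDiff ℝ 1 (pdv j (a l)) := fun j l =>
    contDiff_iff_contDiffAt.2 fun x => (ha l).contDiffAt.pdv (by norm_num) j
  have hc2 : ∀ i j l, HasCompactSupport (pdv i (pdv j (a l))) := fun i j l =>
    (hc1 j l).fderiv_apply ℝ _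
  have ha2 : ∀ i j l, Continuous (pdv i (pdv j (a l))) := fun i j l =>
    (contDiff_iff_contDiffAt (n := 0).2 fun x =>
      (ha1 j l).contDiffAt.pdv (by norm_num) i).continuous
  have hρl : LocallyIntegrable ρ volume := hρ.locallyIntegrable
  have h_int : ∀ l i j, Integrable fun t =>
      bosonicCoeff m k (e l) u i j * (ρ t * pdv i (pdv j (a l)) (x - t)) := by
    intro l i j
    have := ha2 i j l
    refine (Continuous.integrable_of_hasCompactSupport (by fun_prop) ?_).const_mul _
    exact ((hc2 i j l).comp_homeomorph (Homeomorph.subLeft x)).mul_left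
  simp only [fun j l => pdv_convolution hρl (hc l) ((ha l).of_le one_le_two) j,
    fun i j l => pdv_convolution hρl (hc1 j l) (ha1 j l) i, convolution_def,
    ContinuousLinearMap.lsmul_apply, smul_eq_mul, ← integral_const_mul]
  simp only [← integral_finsetSum _ fun j _ => h_int _ _ j]
  simp only [← integral_finsetSum _ fun i _ => integrable_finsetSum _ fun j _ => h_int _ i j]
  rw [← integral_finsetSum _ fun l _ => integrable_finsetSum _ fun i _ =>
    integrable_finsetSum _ fun j _ => h_int l i j]
  refine integral_eq_zero_of_ae (Eventually.of_forall fun t => ?_)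
  by_cases ht : ρ t = 0
  · simp [ht]
  · have h1 := congrArg (fun r => ρ t * r) (hD _ (hx t ht))
    simp only [Finset.mul_sum, mul_zero] at h1
    simp only [Pi.zero_apply]
    rw [← h1]
    refine Finset.sum_congr rfl fun l _ => Finset.sum_congr rfl fun i _ =>
      Finset.sum_congr rfl fun j _ => by ring

/-- Null solutions of `𝒟_k` are reproduced by every kernel reproducing smooth functions that are
polyharmonic of order `k + 1`. -/
theorem C2Hk.eq_integral_kernel {m k : ℕ} (hm : 4 < m) {Ω : Set (Evec m)} (hΩ : IsOpen Ω)
    {F : Evec m → Evec m → ℝ} (hF : C2Hk m k Ω F)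
    (hD : ∀ x ∈ Ω, ∀ u ∈ ball (0 : Evec m) 1, Dk m k F x u = 0)
    {κ : Evec m → ℝ} {δ : ℝ} (hδ : 0 < δ) (hκ : Continuous κ) (hκ0 : ∀ y, δ ≤ ‖y‖ → κ y = 0)
    (hrep : ∀ (G : Evec m → ℝ) (x : Evec m), ContDiff ℝ ∞ G →
      (∀ y ∈ closedBall x δ, lapl^[k + 1] G y = 0) → G x = ∫ y, κ y * G (x + y))
    {x₀ : Evec m} (hx₀ : closedBall x₀ (3 * δ) ⊆ Ω) {u : Evec m} (hu : u ∈ ball (0 : Evec m) 1) :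
    F x₀ u = ∫ y, κ y * F (x₀ + y) u := by
  obtain ⟨N, w, e, hw, he, hs⟩ := exists_hk_sampling m k
  have hes : ∀ l, ContDiff ℝ ∞ (e l) := fun l => (he l).contDiff
  have hFs := hF.eq_sum hw hs
  let χ : ContDiffBump x₀ := ⟨2 * δ, 3 * δ, by linarith, by linarith⟩
  have hχ1 : ∀ x ∈ closedBall x₀ (2 * δ), χ x = 1 := fun x hx => χ.one_of_mem_closedBall hx
  have hχt : tsupport χ ⊆ Ω := by rw [χ.tsupport_eq]; exact hx₀
  let a : Fin N → Evec m → ℝ := fun l x => χ x * F x (w l)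
  have hac : ∀ l, HasCompactSupport (a l) := fun l => χ.hasCompactSupport.mul_right
  have ha : ∀ l, ContDiff ℝ 2 (a l) := fun l =>
    contDiff_of_forall_tsupport fun x hx =>
      χ.contDiffAt.mul (hF.contDiffAt_slice hΩ (hχt (tsupport_mul_subset_left hx)) (hw l))
  have haF : ∀ x ∈ closedBall x₀ (2 * δ), ∀ l, a l x = F x (w l) := fun x hx l => by
    simp [a, hχ1 x hx]
  have hsub : ball x₀ (2 * δ) ⊆ Ω := (ball_subset_closedBall.trans
    (closedBall_subset_closedBall (by linarith))).trans hx₀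
  have hDa : ∀ v ∈ ball (0 : Evec m) 1, ∀ x ∈ ball x₀ (2 * δ),
      ∑ l, ∑ i, ∑ j, bosonicCoeff m k (e l) v i j * pdv i (pdv j (a l)) x = 0 := by
    intro v hv x hx
    rw [← hD x (hsub hx) v hv]
    refine (Dk_tensor isOpen_ball isOpen_ball (fun y hy v hv => ?_)
      (fun l y _ => (ha l).contDiffAt) hes hx hv).symm
    rw [hFs y (hsub hy) v (ball_subset_closedBall hv)]
    exact Finset.sum_congr rfl fun l _ => by rw [haF y (ball_subset_closedBall hy)]
  set Φ : Evec m → ℝ := fun x => ∑ l, a l x * e l u with hΦ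
  have hacont : ∀ l, Continuous (a l) := fun l => (ha l).continuous
  have hΦc : Continuous Φ := by fun_prop
  have hκc : HasCompactSupport κ := by
    refine HasCompactSupport.intro (isCompact_closedBall (0 : Evec m) δ) fun y hy => hκ0 y ?_
    simpa using (not_le.1 (fun h => hy (mem_closedBall_zero_iff.2 h))).le
  have hκi : Integrable κ := hκ.integrable_of_hasCompactSupport hκc
  have hκG : ∀ G : Evec m → ℝ, Continuous G → Integrable fun y => κ y * G (x₀ + y) := fun G hG =>
    Continuous.integrable_of_hasCompactSupport (by fun_prop) hκc.mul_right
  have key : Φ x₀ = ∫ y, κ y * Φ (x₀ + y) := by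
    set A : ℝ := (1 + ∫ y, |κ y|) * ∑ l, |e l u| with hA
    have hA0 : 0 ≤ A := mul_nonneg (add_nonneg zero_le_one
      (integral_nonneg fun y => abs_nonneg _)) (Finset.sum_nonneg fun l _ => abs_nonneg _)
    suffices h : ∀ η > 0, |Φ x₀ - ∫ y, κ y * Φ (x₀ + y)| ≤ A * η by
      refine sub_eq_zero.1 (abs_nonpos_iff.1 (le_of_forall_pos_le_add fun η hη => ?_))
      have h1 := h (η / (A + 1)) (by positivity)
      refine h1.trans ?_
      rw [zero_add, mul_div_assoc', div_le_iff₀ (by positivity)]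
      nlinarith
    intro η hη
    have huc : ∀ l, ∃ ε > 0, ∀ x y, dist x y < ε → dist (a l x) (a l y) < η := fun l => by
      obtain ⟨ε, hε, h⟩ := Metric.uniformContinuous_iff.1
        ((hac l).uniformContinuous_of_continuous (hacont l)) η hη
      exact ⟨ε, hε, fun x y hxy => h hxy⟩
    choose ε hε hεη using huc
    obtain ⟨r, hr, hrε⟩ : ∃ r > 0, r ≤ δ / 2 ∧ ∀ l, r ≤ ε l := by
      obtain ⟨r, hr, h⟩ : ∃ r > 0, ∀ l, r ≤ ε l := by
        have := (Filter.eventually_all.2 fun l => Ioc_mem_nhdsGT (hε l) :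
          ∀ᶠ r in 𝓝[>] (0 : ℝ), ∀ l, r ∈ Set.Ioc 0 (ε l))
        obtain ⟨r, h1, h2⟩ := (this.and self_mem_nhdsWithin).exists
        exact ⟨r, h2, fun l => (h1 l).2⟩
      exact ⟨min r (δ / 2), lt_min hr (by linarith), min_le_right _ _,
        fun l => (min_le_left _ _).trans (h l)⟩
    let ρ : ContDiffBump (0 : Evec m) := ⟨r / 2, r, by linarith, by linarith⟩
    let b : Fin N → Evec m → ℝ := fun l =>
      convolution (ρ.normed volume) (a l) (ContinuousLinearMap.lsmul ℝ ℝ) volume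
    have hb : ∀ l, ContDiff ℝ ∞ (b l) := fun l =>
      ρ.hasCompactSupport_normed.contDiff_convolution_left _ ρ.contDiff_normed
        (hacont l).locallyIntegrable
    have hba : ∀ l x, |b l x - a l x| ≤ η := fun l x => by
      refine ContDiffBump.dist_normed_convolution_le (hacont l).aestronglyMeasurable
        fun y hy => (hεη l _ _ (lt_of_lt_of_le hy (hrε.2 l))).le
    let g : SmoothFn m := ⟨fun p => ∑ l, b l p.1 * e l p.2, by
      change ContDiff ℝ ∞ fun p : Evec m × Evec m => ∑ l, b l p.1 * e l p.2
      refine ContDiff.sum fun l _ => ?_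
      exact ((hb l).comp contDiff_fst).mul ((hes l).comp contDiff_snd)⟩
    have hgh : ∀ (c : ℝ) (x v : Evec m), (g : Evec m × Evec m → ℝ) (x, c • v) =
        c ^ k * (g : Evec m × Evec m → ℝ) (x, v) := by
      intro c x v
      simp only [g, (he _).2.1, Finset.mul_sum]
      exact Finset.sum_congr rfl fun l _ => by ring
    have hgD : ∀ x ∈ ball x₀ (3 / 2 * δ), ∀ v ∈ ball (0 : Evec m) 1,
        Dk m k (fun x v => (g : Evec m × Evec m → ℝ) (x, v)) x v = 0 := by
      intro x hx v hv
      rw [Dk_tensor (a := b) (e := e) isOpen_ball isOpen_ball (fun y _ v _ => rfl)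
        (fun l y _ => ((hb l).of_le ENat.LEInfty.out).contDiffAt) hes hx hv]
      refine sum_bosonicCoeff_convolution_eq_zero ha hac (hDa v hv)
        (ρ.contDiff_normed (n := 0)).continuous fun t ht => ?_
      have ht' : t ∈ ball (0 : Evec m) r := by
        have := ρ.support_normed_eq (μ := volume)
        rw [← this]; exact ht
      rw [mem_ball_zero_iff] at ht'
      rw [mem_ball, dist_eq_norm] at hx ⊢
      have := norm_sub_le (x - x₀) t
      rw [show x - t - x₀ = x - x₀ - t by abel]
      linarith [hrε.1]
    have hgrep := hrep (fun x => (g : Evec m × Evec m → ℝ) (x, u)) x₀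
      (by exact (SmoothFn.contDiff g).comp (contDiff_id.prodMk contDiff_const)) fun y hy =>
        SmoothFn.polyharmonic_of_Dk_eq_zero hm k g isOpen_ball hgh hgD
          (closedBall_subset_ball (by linarith) hy) hu
    set G : Evec m → ℝ := fun x => (g : Evec m × Evec m → ℝ) (x, u) with hG
    have hGc : Continuous G := (SmoothFn.contDiff g).continuous.comp (by fun_prop)
    have hGΦ : ∀ x, |G x - Φ x| ≤ η * ∑ l, |e l u| := by
      intro x
      have : G x - Φ x = ∑ l, (b l x - a l x) * e l u := by
        simp only [hG, hΦ, g, sub_mul, Finset.sum_sub_distrib]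
      rw [this, Finset.mul_sum]
      refine (Finset.abs_sum_le_sum_abs _ _).trans (Finset.sum_le_sum fun l _ => ?_)
      rw [abs_mul]
      exact mul_le_mul_of_nonneg_right (hba l x) (abs_nonneg _)
    have hdiff : |∫ y, κ y * (G (x₀ + y) - Φ (x₀ + y))| ≤
        (∫ y, |κ y|) * (η * ∑ l, |e l u|) := by
      rw [← integral_mul_const, ← Real.norm_eq_abs]
      refine norm_integral_le_of_norm_le (hκi.abs.mul_const _) (Eventually.of_forall fun y => ?_)
      rw [norm_mul]
      exact mul_le_mul_of_nonneg_left (hGΦ _) (abs_nonneg _)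
    have hsplit : Φ x₀ - ∫ y, κ y * Φ (x₀ + y) =
        (∫ y, κ y * (G (x₀ + y) - Φ (x₀ + y))) - (G x₀ - Φ x₀) := by
      simp only [mul_sub]
      rw [integral_sub (hκG G hGc) (hκG Φ hΦc), ← hgrep]
      ring
    rw [hsplit]
    refine (abs_sub _ _).trans ((add_le_add hdiff (hGΦ x₀)).trans (le_of_eq ?_))
    rw [hA]; ring
  have hΦF : ∀ x ∈ closedBall x₀ δ, Φ x = F x u := fun x hx => by
    have hx2 : x ∈ closedBall x₀ (2 * δ) := closedBall_subset_closedBall (by linarith) hx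
    rw [hFs x (hx₀ (closedBall_subset_closedBall (by linarith) hx)) u (ball_subset_closedBall hu)]
    exact Finset.sum_congr rfl fun l _ => by rw [haF x hx2]
  rw [← hΦF x₀ (mem_closedBall_self hδ.le), key]
  refine integral_congr_ae (Eventually.of_forall fun y => ?_)
  by_cases hy : δ ≤ ‖y‖
  · simp [hκ0 y hy]
  · have hmem : x₀ + y ∈ closedBall x₀ δ := by
      rw [mem_closedBall, dist_eq_norm, add_sub_cancel_left]; exact (not_le.1 hy).le
    simp only [hΦF _ hmem]

theorem exists_subseq_tendstoLocallyUniformly {X β : Type*} [TopologicalSpace X]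
    [LocallyCompactSpace X] [SigmaCompactSpace X] [MetricSpace β] [CompleteSpace β]
    (g : ℕ → C(X, β)) (heq : Equicontinuous fun n x => g n x)
    (hb : ∀ x, ∃ Q : Set β, IsCompact Q ∧ ∀ n, g n x ∈ Q) :
    ∃ φ : ℕ → ℕ, StrictMono φ ∧ ∃ f : C(X, β),
      TendstoLocallyUniformly (fun n x => g (φ n) x) f atTop := by
  have : T2Space (UniformOnFun X β {K | IsCompact K}) := UniformOnFun.t2Space_of_covering <|
    Set.sUnion_eq_univ_iff.2 fun x => ⟨{x}, isCompact_singleton, rfl⟩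
  have hcl : IsCompact (closure (Set.range g)) := by
    refine ArzelaAscoli.isCompact_closure_of_isClosedEmbedding (𝔖 := {K | IsCompact K})
      (F := fun f : C(X, β) => (f : X → β)) (fun K hK => hK)
      (ContinuousMap.isUniformEmbedding_toUniformOnFunIsCompact.isClosedEmbedding) ?_ ?_
    · intro K _
      refine Equicontinuous.equicontinuousOn ?_ K
      intro x V hV
      filter_upwards [heq x V hV] with y hy
      rintro ⟨_, n, rfl⟩
      exact hy n
    · rintro K _ x _
      obtain ⟨Q, hQ, h⟩ := hb x
      exact ⟨Q, hQ, by rintro _ ⟨n, rfl⟩; exact h n⟩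
  obtain ⟨f, -, φ, hφ, hf⟩ := hcl.isSeqCompact fun n => subset_closure (Set.mem_range_self (f := g) n)
  exact ⟨φ, hφ, f, ContinuousMap.tendsto_iff_tendstoLocallyUniformly.1 hf⟩

/-- `a` coincides near `x₀` with the convolution of a truncation of `a` with `κ`. -/
def LocallyReproduced {m : ℕ} (x₀ : Evec m) (δ : ℝ) (κ a : Evec m → ℝ) : Prop :=
  ∀ x ∈ ball x₀ δ, a x = convolution ((closedBall x₀ (2 * δ)).indicator a) κ
    (ContinuousLinearMap.lsmul ℝ ℝ) volume x

theorem convolution_indicator_apply {m : ℕ} (B : Set (Evec m)) (hB : MeasurableSet B)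
    (κ a : Evec m → ℝ) (x : Evec m) :
    convolution (B.indicator a) κ (ContinuousLinearMap.lsmul ℝ ℝ) volume x =
      ∫ z in B, a z * κ (x - z) := by
  rw [convolution_def, ← integral_indicator hB]
  refine integral_congr_ae (Eventually.of_forall fun z => ?_)
  by_cases hz : z ∈ B <;> simp [hz]

theorem exists_locallyReproduced {m k : ℕ} (hm : 4 < m) {Ω : Set (Evec m)} (hΩ : IsOpen Ω)
    {x₀ : Evec m} (hx₀ : x₀ ∈ Ω) :
    ∃ δ > 0, closedBall x₀ (2 * δ) ⊆ Ω ∧ ∃ κ : Evec m → ℝ, ContDiff ℝ ∞ κ ∧ HasCompactSupport κ ∧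
      ∀ F : Evec m → Evec m → ℝ, C2Hk m k Ω F →
        (∀ x ∈ Ω, ∀ u ∈ ball (0 : Evec m) 1, Dk m k F x u = 0) →
        ∀ u ∈ ball (0 : Evec m) 1, LocallyReproduced x₀ δ κ fun x => F x u := by
  obtain ⟨ε, hε, hεΩ⟩ := Metric.isOpen_iff.1 hΩ x₀ hx₀
  set δ := ε / 5 with hδdef
  have hδ : 0 < δ := by positivity
  obtain ⟨κ, hκ, hκ0, hκe, hrep⟩ := exists_polyharmonic_kernel m (k + 1) hδ
  have hκc : HasCompactSupport κ := by
    refine HasCompactSupport.intro (isCompact_closedBall (0 : Evec m) δ) fun y hy => hκ0 y ?_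
    simpa using (not_le.1 (fun h => hy (mem_closedBall_zero_iff.2 h))).le
  refine ⟨δ, hδ, (closedBall_subset_ball (by linarith)).trans hεΩ, κ, hκ, hκc, ?_⟩
  intro F hF hD u hu x hx
  have hxΩ : closedBall x (3 * δ) ⊆ Ω := fun y hy => hεΩ <| by
    rw [mem_ball] at hx ⊢
    rw [mem_closedBall] at hy
    linarith [dist_triangle y x x₀]
  beta_reduce
  rw [hF.eq_integral_kernel hm hΩ hD hδ hκ.continuous hκ0 hrep hxΩ hu,
    convolution_indicator_apply _ isClosed_closedBall.measurableSet,
    setIntegral_eq_integral_of_forall_compl_eq_zero,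
    ← integral_add_left_eq_self (fun z => F z u * κ (x - z)) x]
  · refine integral_congr_ae (Eventually.of_forall fun y => ?_)
    simp [hκe, mul_comm]
  · intro z hz
    rw [hκ0, mul_zero]
    rw [mem_closedBall, not_le] at hz
    rw [mem_ball, dist_comm] at hx
    have := dist_triangle z x x₀
    rw [← dist_eq_norm, dist_comm]
    rw [dist_comm] at hx
    linarith

theorem abs_convolution_indicator_le {m : ℕ} {B : Set (Evec m)} (hB : MeasurableSet B)
    {a : Evec m → ℝ} (ha : IntegrableOn a B) {κ : Evec m → ℝ} {C : ℝ} (hκ : ∀ y, |κ y| ≤ C)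
    (x : Evec m) :
    |convolution (B.indicator a) κ (ContinuousLinearMap.lsmul ℝ ℝ) volume x| ≤
      C * ∫ z in B, |a z| := by
  rw [convolution_indicator_apply B hB, ← integral_const_mul, ← Real.norm_eq_abs]
  refine norm_integral_le_of_norm_le (ha.abs.const_mul C) (Eventually.of_forall fun z => ?_)
  rw [norm_mul, mul_comm]
  exact mul_le_mul_of_nonneg_right (hκ _) (abs_nonneg _)

theorem exists_subseq_of_locallyReproduced {m N : ℕ} {Ω : Set (Evec m)} (hΩ : IsOpen Ω)
    {a : ℕ → Fin N → Evec m → ℝ} (ha : ∀ n l, ContinuousOn (a n l) Ω)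
    (hrep : ∀ x₀ ∈ Ω, ∃ δ > 0, closedBall x₀ (2 * δ) ⊆ Ω ∧ ∃ κ : Evec m → ℝ, ContDiff ℝ ∞ κ ∧
      HasCompactSupport κ ∧ ∀ n l, LocallyReproduced x₀ δ κ (a n l))
    (hbdd : ∀ K : Set (Evec m), IsCompact K → K ⊆ Ω → ∃ C : ℝ, ∀ n l, ∫ x in K, |a n l x| ≤ C) :
    ∃ φ : ℕ → ℕ, StrictMono φ ∧ ∃ f : Fin N → Evec m → ℝ, (∀ l, ContinuousOn (f l) Ω) ∧
      ∀ l, TendstoLocallyUniformlyOn (fun n => a (φ n) l) (f l) atTop Ω := by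
  have : LocallyCompactSpace Ω := hΩ.locallyCompactSpace
  have : SigmaCompactSpace Ω := inferInstance
  let g : ℕ → C(Ω, Fin N → ℝ) := fun n =>
    ⟨fun x l => a n l x, continuous_pi fun l => continuousOn_iff_continuous_domRestrict.1 (ha n l)⟩
  have heq : Equicontinuous fun n (x : Ω) => g n x := by
    intro x
    rw [Metric.equicontinuousAt_iff_right]
    intro ε hε
    obtain ⟨δ, hδ, hsub, κ, hκ, hκc, h⟩ := hrep x x.2
    obtain ⟨C, hC⟩ := hbdd _ (isCompact_closedBall _ _) hsub
    have hu := Metric.uniformContinuous_iff.1 (hκc.uniformContinuous_of_continuous hκ.continuous)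
      (ε / (|C| + 1) / 2) (by positivity)
    obtain ⟨r, hr, hru⟩ := hu
    have hnhds : ∀ᶠ y : Ω in 𝓝 x, dist (y : Evec m) x < min δ r :=
      (continuous_subtype_val.tendsto x).eventually (ball_mem_nhds _ (lt_min hδ hr))
    filter_upwards [hnhds] with y hy n
    rw [dist_pi_lt_iff hε]
    intro l
    have h_int : IntegrableOn (a n l) (closedBall (x : Evec m) (2 * δ)) :=
      ((ha n l).mono hsub).integrableOn_compact (isCompact_closedBall _ _)
    change dist (a n l x) (a n l y) < ε
    rw [h n l x (mem_ball_self hδ), h n l y (lt_of_lt_of_le hy (min_le_left _ _)),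
      convolution_indicator_apply _ isClosed_closedBall.measurableSet,
      convolution_indicator_apply _ isClosed_closedBall.measurableSet, dist_eq_norm]
    have hi : ∀ x' : Evec m, IntegrableOn (fun z => a n l z * κ (x' - z))
        (closedBall (x : Evec m) (2 * δ)) := fun x' => by
      refine ContinuousOn.integrableOn_compact (isCompact_closedBall _ _) ?_
      exact ((ha n l).mono hsub).mul (hκ.continuous.comp (by fun_prop)).continuousOn
    rw [← integral_sub (hi x) (hi y)]
    have hle : ‖∫ z in closedBall (x : Evec m) (2 * δ),
        (a n l z * κ (x - z) - a n l z * κ (y - z))‖ ≤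
        ∫ z in closedBall (x : Evec m) (2 * δ), ε / (|C| + 1) / 2 * |a n l z| := by
      refine norm_integral_le_of_norm_le (h_int.abs.const_mul _) (Eventually.of_forall fun z => ?_)
      rw [← mul_sub, norm_mul, mul_comm]
      refine mul_le_mul_of_nonneg_right ?_ (abs_nonneg _)
      rw [← dist_eq_norm]
      refine (hru ?_).le
      rw [dist_sub_right, dist_comm]
      exact lt_of_lt_of_le hy (min_le_right _ _)
    refine hle.trans_lt ?_
    rw [integral_const_mul]
    have h1 : ∫ z in closedBall (x : Evec m) (2 * δ), |a n l z| ≤ |C| := (hC n l).trans (le_abs_self C)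
    have h2 : ε / (|C| + 1) / 2 * |C| < ε := by
      rw [div_div, div_mul_eq_mul_div, div_lt_iff₀ (by positivity)]
      nlinarith [abs_nonneg C]
    exact (mul_le_mul_of_nonneg_left h1 (by positivity)).trans_lt h2
  obtain ⟨φ, hφ, f, hf⟩ := exists_subseq_tendstoLocallyUniformly g heq (by
    intro x
    obtain ⟨δ, hδ, hsub, κ, hκ, hκc, h⟩ := hrep x x.2
    obtain ⟨C, hC⟩ := hbdd _ (isCompact_closedBall _ _) hsub
    obtain ⟨D, hD⟩ := hκc.exists_bound_of_continuous hκ.continuous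
    refine ⟨Set.univ.pi fun _ => Set.Icc (-(D * C)) (D * C),
      isCompact_univ_pi fun _ => isCompact_Icc, fun n l _ => abs_le.1 ?_⟩
    have h_int : IntegrableOn (a n l) (closedBall (x : Evec m) (2 * δ)) :=
      ((ha n l).mono hsub).integrableOn_compact (isCompact_closedBall _ _)
    change |a n l x| ≤ _
    rw [h n l x (mem_ball_self hδ)]
    exact (abs_convolution_indicator_le isClosed_closedBall.measurableSet h_int hD _).trans
      (mul_le_mul_of_nonneg_left (hC n l) ((norm_nonneg _).trans (hD 0))))
  classical
  let f' : Fin N → Evec m → ℝ := fun l x => if hx : x ∈ Ω then f ⟨x, hx⟩ l else 0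
  have hf' : ∀ l (x : Ω), f' l x = f x l := fun l x => by simp [f']
  refine ⟨φ, hφ, f', fun l => ?_, fun l => ?_⟩
  · rw [continuousOn_iff_continuous_domRestrict]
    have : Ω.domRestrict (f' l) = fun x => f x l := funext fun x => hf' l x
    rw [this]
    fun_prop
  · rw [tendstoLocallyUniformlyOn_iff_tendstoLocallyUniformly_comp_coe]
    have h1 : f' l ∘ ((↑) : Ω → Evec m) = fun x => f x l := funext fun x => hf' l x
    rw [h1]
    rw [Metric.tendstoLocallyUniformly_iff] at hf ⊢
    intro ε hε x
    obtain ⟨t, ht, h⟩ := hf ε hε x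
    refine ⟨t, ht, h.mono fun n hn y hy => ?_⟩
    exact (dist_le_pi_dist (f y) (g (φ n) y) l).trans_lt (hn y hy)

theorem exists_list_Dx_eq {m : ℕ} (α : Fin m → ℕ) : ∃ L : List (Fin m),
    ∀ f : Evec m → Evec m → ℝ, Dx α f = fun x u => L.foldr pdv (fun y => f y u) x := by
  suffices h : ∀ s : List (Fin m), ∃ L : List (Fin m), ∀ f : Evec m → Evec m → ℝ,
      s.foldr (fun i g => (pd1 i)^[α i] g) f = fun x u => L.foldr pdv (fun y => f y u) x from
    h (List.finRange m)
  intro s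
  induction s with
  | nil => exact ⟨[], fun f => rfl⟩
  | cons i s ih =>
    obtain ⟨L, hL⟩ := ih
    refine ⟨List.replicate (α i) i ++ L, fun f => ?_⟩
    rw [List.foldr_cons, hL f]
    induction α i with
    | zero => rfl
    | succ n ihn =>
      rw [Function.iterate_succ_apply', ihn]
      rfl

theorem contDiff_foldr_pdv {m : ℕ} {κ : Evec m → ℝ} (hκ : ContDiff ℝ ∞ κ) (L : List (Fin m)) :
    ContDiff ℝ ∞ (L.foldr pdv κ) := by
  induction L with
  | nil => exact hκ
  | cons i L ih => exact contDiff_pdv ih i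

theorem HasCompactSupport.foldr_pdv {m : ℕ} {κ : Evec m → ℝ} (hκ : HasCompactSupport κ)
    (L : List (Fin m)) : HasCompactSupport (L.foldr pdv κ) := by
  induction L with
  | nil => exact hκ
  | cons i L ih => exact ih.fderiv_apply ℝ _

theorem foldr_pdv_convolution {m : ℕ} {f κ : Evec m → ℝ} (hf : LocallyIntegrable f volume)
    (hκ : ContDiff ℝ ∞ κ) (hc : HasCompactSupport κ) (L : List (Fin m)) :
    L.foldr pdv (convolution f κ (ContinuousLinearMap.lsmul ℝ ℝ) volume) =
      convolution f (L.foldr pdv κ) (ContinuousLinearMap.lsmul ℝ ℝ) volume := by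
  induction L with
  | nil => rfl
  | cons i L ih =>
    rw [List.foldr_cons, ih, pdv_convolution hf (hc.foldr_pdv L)
      ((contDiff_foldr_pdv hκ L).of_le ENat.LEInfty.out)]
    rfl

theorem Filter.EventuallyEq.foldr_pdv {m : ℕ} {f g : Evec m → ℝ} {x : Evec m} (h : f =ᶠ[𝓝 x] g)
    (L : List (Fin m)) : L.foldr _root_.pdv f =ᶠ[𝓝 x] L.foldr _root_.pdv g := by
  induction L with
  | nil => exact h
  | cons i L ih => exact ih.pdv i

theorem foldr_pdv_tensor {m N : ℕ} {Ω : Set (Evec m)} (hΩ : IsOpen Ω) {a : Fin N → Evec m → ℝ}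
    (ha : ∀ l, ∀ x ∈ Ω, ContDiffAt ℝ ∞ (a l) x) {f : Evec m → ℝ} {c : Fin N → ℝ}
    (hf : ∀ x ∈ Ω, f x = ∑ l, a l x * c l) (L : List (Fin m)) :
    (∀ l, ∀ x ∈ Ω, ContDiffAt ℝ ∞ (L.foldr pdv (a l)) x) ∧
      ∀ x ∈ Ω, L.foldr pdv f x = ∑ l, L.foldr pdv (a l) x * c l := by
  induction L with
  | nil => exact ⟨ha, hf⟩
  | cons i L ih =>
    refine ⟨fun l x hx => (ih.1 l x hx).pdv (by simp) i, fun x hx => ?_⟩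
    exact pd1_tensor (B := Set.univ) (f := fun x _ => L.foldr pdv f x) (e := fun l _ => c l) hΩ
      (fun x hx _ _ => ih.2 x hx) (fun l x hx => (ih.1 l x hx).differentiableAt (by simp)) i x hx
      0 trivial

namespace LocallyReproduced

variable {m : ℕ} {x₀ : Evec m} {δ : ℝ} {κ a : Evec m → ℝ}

theorem locallyIntegrable_indicator (ha : ContinuousOn a (closedBall x₀ (2 * δ))) :
    LocallyIntegrable ((closedBall x₀ (2 * δ)).indicator a) volume :=
  ((integrable_indicator_iff isClosed_closedBall.measurableSet).2
    (ha.integrableOn_compact (isCompact_closedBall _ _))).locallyIntegrable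

theorem foldr_pdv_eq (h : LocallyReproduced x₀ δ κ a)
    (ha : ContinuousOn a (closedBall x₀ (2 * δ))) (hκ : ContDiff ℝ ∞ κ) (hc : HasCompactSupport κ)
    (L : List (Fin m)) : ∀ x ∈ ball x₀ δ, L.foldr pdv a x =
      convolution ((closedBall x₀ (2 * δ)).indicator a) (L.foldr pdv κ)
        (ContinuousLinearMap.lsmul ℝ ℝ) volume x := by
  intro x hx
  rw [← foldr_pdv_convolution (locallyIntegrable_indicator ha) hκ hc]
  refine (Filter.EventuallyEq.foldr_pdv ?_ L).eq_of_nhds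
  filter_upwards [isOpen_ball.mem_nhds hx] with y hy using h y hy

theorem contDiffAt (h : LocallyReproduced x₀ δ κ a)
    (ha : ContinuousOn a (closedBall x₀ (2 * δ))) (hκ : ContDiff ℝ ∞ κ) (hc : HasCompactSupport κ)
    {x : Evec m} (hx : x ∈ ball x₀ δ) : ContDiffAt ℝ ∞ a x := by
  refine ContDiffAt.congr_of_eventuallyEq
    (hc.contDiff_convolution_right (ContinuousLinearMap.lsmul ℝ ℝ)
      (locallyIntegrable_indicator ha) hκ).contDiffAt ?_
  filter_upwards [isOpen_ball.mem_nhds hx] with y hy using h y hy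

end LocallyReproduced

theorem abs_convolution_indicator_sub_le {m : ℕ} {B : Set (Evec m)} (hB : IsCompact B)
    {a b κ : Evec m → ℝ} (ha : ContinuousOn a B) (hb : ContinuousOn b B) (hκ : Continuous κ)
    {C η : ℝ} (hC : ∀ y, |κ y| ≤ C) (hη : ∀ z ∈ B, |a z - b z| ≤ η) (x : Evec m) :
    |convolution (B.indicator a) κ (ContinuousLinearMap.lsmul ℝ ℝ) volume x -
      convolution (B.indicator b) κ (ContinuousLinearMap.lsmul ℝ ℝ) volume x| ≤
      C * (η * volume.real B) := by
  have hκx : ContinuousOn (fun z => κ (x - z)) B := (hκ.comp (by fun_prop)).continuousOn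
  have hi : ∀ g : Evec m → ℝ, ContinuousOn g B → IntegrableOn (fun z => g z * κ (x - z)) B :=
    fun g hg => ContinuousOn.integrableOn_compact hB (hg.mul hκx)
  rw [convolution_indicator_apply B hB.measurableSet,
    convolution_indicator_apply B hB.measurableSet, ← integral_sub (hi a ha) (hi b hb),
    ← Real.norm_eq_abs, ← mul_assoc]
  refine norm_setIntegral_le_of_norm_le_const hB.measure_lt_top fun z hz => ?_
  rw [← sub_mul, norm_mul, mul_comm]
  exact mul_le_mul (hC _) (hη z hz) (norm_nonneg _) ((abs_nonneg _).trans (hC 0))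

theorem LocallyReproduced.of_tendsto {m : ℕ} {x₀ : Evec m} {δ : ℝ} {κ f : Evec m → ℝ}
    {a : ℕ → Evec m → ℝ} (hδ : 0 < δ) (h : ∀ n, LocallyReproduced x₀ δ κ (a n))
    (hκ : Continuous κ) (hc : HasCompactSupport κ)
    (ha : ∀ n, ContinuousOn (a n) (closedBall x₀ (2 * δ)))
    (hf : ContinuousOn f (closedBall x₀ (2 * δ)))
    (hlim : TendstoUniformlyOn a f atTop (closedBall x₀ (2 * δ))) :
    LocallyReproduced x₀ δ κ f := by
  intro x hx
  obtain ⟨C, hC⟩ := hc.exists_bound_of_continuous hκ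
  have h1 : Tendsto (fun n => a n x) atTop (𝓝 (f x)) :=
    hlim.tendsto_at (ball_subset_closedBall (ball_subset_ball (by linarith) hx))
  refine tendsto_nhds_unique h1 ?_
  simp only [h _ x hx]
  rw [Metric.tendsto_atTop']
  intro ε hε
  set V := volume.real (closedBall x₀ (2 * δ))
  have hC0 : 0 ≤ C := (norm_nonneg _).trans (hC 0)
  have hV : 0 ≤ V := measureReal_nonneg
  obtain ⟨n₀, hn₀⟩ := eventually_atTop.1
    (Metric.tendstoUniformlyOn_iff.1 hlim (ε / (C * V + 1)) (by positivity))
  refine ⟨n₀, fun n hn => ?_⟩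
  refine (abs_convolution_indicator_sub_le (isCompact_closedBall _ _) (ha n) hf hκ hC
    (η := ε / (C * V + 1)) (fun z hz => ?_) x).trans_lt ?_
  · have := (hn₀ n hn.le z hz).le
    rwa [dist_comm] at this
  · rw [show C * (ε / (C * V + 1) * V) = ε * (C * V) / (C * V + 1) by ring,
      div_lt_iff₀ (by positivity)]
    nlinarith

theorem tendstoLocallyUniformlyOn_foldr_pdv {m : ℕ} {Ω : Set (Evec m)} (hΩ : IsOpen Ω)
    {a : ℕ → Evec m → ℝ} {f : Evec m → ℝ} (ha : ∀ n, ContinuousOn (a n) Ω)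
    (hf : ContinuousOn f Ω)
    (hrep : ∀ x₀ ∈ Ω, ∃ δ > 0, closedBall x₀ (2 * δ) ⊆ Ω ∧ ∃ κ : Evec m → ℝ, ContDiff ℝ ∞ κ ∧
      HasCompactSupport κ ∧ ∀ n, LocallyReproduced x₀ δ κ (a n))
    (hlim : TendstoLocallyUniformlyOn a f atTop Ω) :
    (∀ x ∈ Ω, ContDiffAt ℝ ∞ f x) ∧ ∀ L : List (Fin m),
      TendstoLocallyUniformlyOn (fun n => L.foldr pdv (a n)) (L.foldr pdv f) atTop Ω := by
  have hK := (tendstoLocallyUniformlyOn_iff_forall_isCompact hΩ).1 hlim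
  constructor
  · intro x hx
    obtain ⟨δ, hδ, hsub, κ, hκ, hc, h⟩ := hrep x hx
    exact (LocallyReproduced.of_tendsto hδ h hκ.continuous hc (fun n => (ha n).mono hsub)
      (hf.mono hsub) (hK _ hsub (isCompact_closedBall _ _))).contDiffAt (hf.mono hsub) hκ hc
        (mem_ball_self hδ)
  intro L
  rw [Metric.tendstoLocallyUniformlyOn_iff]
  intro ε hε x hx
  obtain ⟨δ, hδ, hsub, κ, hκ, hc, h⟩ := hrep x hx
  have hlimB := hK _ hsub (isCompact_closedBall _ _)
  have hfr := LocallyReproduced.of_tendsto hδ h hκ.continuous hc (fun n => (ha n).mono hsub)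
    (hf.mono hsub) hlimB
  have hκL := (contDiff_foldr_pdv hκ L).continuous
  obtain ⟨C, hC⟩ := (hc.foldr_pdv L).exists_bound_of_continuous hκL
  set V := volume.real (closedBall x (2 * δ))
  have hC0 : 0 ≤ C := (norm_nonneg _).trans (hC 0)
  have hV : 0 ≤ V := measureReal_nonneg
  refine ⟨ball x δ, mem_nhdsWithin_of_mem_nhds (ball_mem_nhds x hδ), ?_⟩
  filter_upwards [Metric.tendstoUniformlyOn_iff.1 hlimB (ε / (C * V + 1)) (by positivity)]
    with n hn y hy
  rw [hfr.foldr_pdv_eq (hf.mono hsub) hκ hc L y hy,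
    (h n).foldr_pdv_eq ((ha n).mono hsub) hκ hc L y hy]
  refine (abs_convolution_indicator_sub_le (isCompact_closedBall _ _) (hf.mono hsub)
    ((ha n).mono hsub) hκL hC (fun z hz => (hn z hz).le) y).trans_lt ?_
  rw [show C * (ε / (C * V + 1) * V) = ε * (C * V) / (C * V + 1) by ring,
    div_lt_iff₀ (by positivity)]
  nlinarith

theorem continuousOn_integral_abs {m k : ℕ} {Ω : Set (Evec m)} (hΩ : IsOpen Ω)
    {F : Evec m → Evec m → ℝ} (hF : C2Hk m k Ω F) :
    ContinuousOn (fun x => ∫ v in ball (0 : Evec m) 1, |F x v|) Ω := by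
  obtain ⟨N, w, e, hw, he, hs⟩ := exists_hk_sampling m k
  have hec : ∀ l, Continuous (e l) := fun l => (he l).contDiff.continuous
  have hI : Continuous fun c : Fin N → ℝ =>
      ∫ v in closedBall (0 : Evec m) 1, |∑ l, c l * e l v| :=
    continuous_parametric_integral_of_continuous
      (f := fun (c : Fin N → ℝ) v => |∑ l, c l * e l v|) (by
        simp only [Function.uncurry_def]
        fun_prop) (isCompact_closedBall _ _)
  have hslice : ContinuousOn (fun x l => F x (w l)) Ω := continuousOn_pi.2 fun l x hx =>
    (hF.contDiffAt_slice hΩ hx (hw l)).continuousAt.continuousWithinAt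
  refine (hI.comp_continuousOn hslice).congr fun x hx => ?_
  have hae : ball (0 : Evec m) 1 =ᵐ[volume] closedBall (0 : Evec m) 1 := by
    refine ae_eq_of_subset_of_measure_ge ball_subset_closedBall ?_
      measurableSet_ball.nullMeasurableSet measure_closedBall_lt_top.ne
    rw [Measure.addHaar_unitClosedBall_eq_addHaar_unitBall]
  simp only [setIntegral_congr_set hae]
  refine setIntegral_congr_fun isClosed_closedBall.measurableSet fun v hv => ?_
  simp only [hF.eq_sum hw hs x hx v hv]

theorem exists_integral_abs_slice_bound {m k N : ℕ} {Ω : Set (Evec m)} (hΩ : IsOpen Ω)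
    {w : Fin N → Evec m} (hw : ∀ l, w l ∈ ball (0 : Evec m) 1) {K : Set (Evec m)}
    (hK : IsCompact K) (hKΩ : K ⊆ Ω) {F : ℕ → Evec m → Evec m → ℝ} (hF : ∀ n, C2Hk m k Ω (F n))
    (hbdd : ∃ C : ℝ, ∀ n, (∫ x in K, ∫ ν in ball (0 : Evec m) 1, |F n x ν|) ≤ C) :
    ∃ C : ℝ, ∀ n l, ∫ x in K, |F n x (w l)| ≤ C := by
  obtain ⟨C, hC⟩ := hbdd
  choose D hD0 hD using fun l => exists_hk_bound m k (hw l)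
  refine ⟨(∑ l, D l) * |C|, fun n l => ?_⟩
  have hslice : ContinuousOn (fun x => F n x (w l)) K := fun x hx =>
    ((hF n).contDiffAt_slice hΩ (hKΩ hx) (hw l)).continuousAt.continuousWithinAt
  calc ∫ x in K, |F n x (w l)|
      ≤ ∫ x in K, D l * ∫ ν in ball (0 : Evec m) 1, |F n x ν| := by
        refine setIntegral_mono_on (hslice.abs.integrableOn_compact hK)
          ((((continuousOn_integral_abs hΩ (hF n)).mono hKΩ).integrableOn_compact hK).const_mul _)
          hK.measurableSet fun x hx => ?_
        obtain ⟨q, hq, hFq⟩ := (hF n).2 x (hKΩ hx)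
        rw [hFq _ (ball_subset_closedBall (hw l)), setIntegral_congr_fun measurableSet_ball
          (g := fun ν => |q ν|) fun ν hν => congrArg abs (hFq ν (ball_subset_closedBall hν))]
        exact hD l q hq
    _ = D l * ∫ x in K, ∫ ν in ball (0 : Evec m) 1, |F n x ν| := integral_const_mul _ _
    _ ≤ D l * |C| := mul_le_mul_of_nonneg_left ((hC n).trans (le_abs_self C)) (hD0 l)
    _ ≤ (∑ l, D l) * |C| := mul_le_mul_of_nonneg_right
        (Finset.single_le_sum (fun l _ => hD0 l) (Finset.mem_univ l)) (abs_nonneg C)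

theorem c2Hk_sum {m k N : ℕ} {Ω : Set (Evec m)} {a e : Fin N → Evec m → ℝ}
    (ha : ∀ l, ∀ x ∈ Ω, ContDiffAt ℝ 2 (a l) x) (he : ∀ l, IsHk m k (e l)) :
    C2Hk m k Ω fun x u => ∑ l, a l x * e l u := by
  refine ⟨ContDiffOn.sum fun l _ => ContDiffOn.mul (fun q hq => ?_) ?_, fun x hx =>
    ⟨∑ l, a l x • e l, (hkSpace m k).sum_mem fun l _ => (hkSpace m k).smul_mem _ (he l),
      fun u _ => by simp⟩⟩
  · exact ((ha l q.1 hq.1).comp q contDiffAt_fst).contDiffWithinAt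
  · exact (((he l).contDiff.of_le ENat.LEInfty.out).comp contDiff_snd).contDiffOn

theorem tendstoUniformlyOn_sum_mul {ι X Y : Type*} {N : ℕ} {p : Filter ι} {K₁ : Set X} {K₂ : Set Y}
    {b : ι → Fin N → X → ℝ} {g : Fin N → X → ℝ} {e : Fin N → Y → ℝ}
    (hb : ∀ l, TendstoUniformlyOn (fun n => b n l) (g l) p K₁)
    (he : ∀ l, ∃ M : ℝ, ∀ u ∈ K₂, |e l u| ≤ M) :
    TendstoUniformlyOn (fun n (q : X × Y) => ∑ l, b n l q.1 * e l q.2)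
      (fun q => ∑ l, g l q.1 * e l q.2) p (K₁ ×ˢ K₂) := by
  choose M hM using he
  rw [Metric.tendstoUniformlyOn_iff]
  intro ε hε
  have hS : 0 ≤ ∑ l, |M l| := Finset.sum_nonneg fun l _ => abs_nonneg _
  filter_upwards [eventually_all.2 fun l => Metric.tendstoUniformlyOn_iff.1 (hb l)
    (ε / (∑ l, |M l| + 1)) (by positivity)] with n hn q hq
  rw [Real.dist_eq, ← Finset.sum_sub_distrib]
  calc |∑ l, (g l q.1 * e l q.2 - b n l q.1 * e l q.2)|
      ≤ ∑ l, |g l q.1 * e l q.2 - b n l q.1 * e l q.2| := Finset.abs_sum_le_sum_abs _ _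
    _ ≤ ∑ l, ε / (∑ l, |M l| + 1) * |M l| := by
        refine Finset.sum_le_sum fun l _ => ?_
        rw [← sub_mul, abs_mul]
        exact mul_le_mul (hn l q.1 hq.1).le ((hM l q.2 hq.2).trans (le_abs_self _))
          (abs_nonneg _) (by positivity)
    _ = ε * (∑ l, |M l|) / (∑ l, |M l| + 1) := by rw [← Finset.mul_sum]; ring
    _ < ε := by
        rw [div_lt_iff₀ (by positivity)]
        nlinarith

/-- normal-families/compactness property for null solutions of the
bosonic Laplacian, `m > 4`. -/
theorem stmt_19 (m k : ℕ) (hm : 4 < m) (hk : 1 ≤ k)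
    (Ω : Set (Evec m)) (hΩ : IsOpen Ω)
    (F : ℕ → Evec m → Evec m → ℝ)
    (hreg : ∀ j, C2Hk m k Ω (F j))
    (hD : ∀ j, ∀ x ∈ Ω, ∀ ν ∈ ball (0 : Evec m) 1, Dk m k (F j) x ν = 0)
    (hbdd : ∀ K : Set (Evec m), IsCompact K → K ⊆ Ω →
      ∃ C : ℝ, ∀ j, (∫ x in K, ∫ ν in ball (0 : Evec m) 1, |F j x ν|) ≤ C) :
    ∃ φ : ℕ → ℕ, StrictMono φ ∧
      ∃ f : Evec m → Evec m → ℝ, C2Hk m k Ω f ∧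
        (∀ x ∈ Ω, ∀ ν ∈ ball (0 : Evec m) 1, Dk m k f x ν = 0) ∧
        ∀ (α : Fin m → ℕ) (K₁ K₂ : Set (Evec m)),
          IsCompact K₁ → K₁ ⊆ Ω → IsCompact K₂ → K₂ ⊆ ball (0 : Evec m) 1 →
          TendstoUniformlyOn (fun n (q : Evec m × Evec m) => Dx α (F (φ n)) q.1 q.2)
            (fun q : Evec m × Evec m => Dx α f q.1 q.2) atTop (K₁ ×ˢ K₂) := by
  obtain ⟨N, w, e, hw, he, hs⟩ := exists_hk_sampling m k
  let a : ℕ → Fin N → Evec m → ℝ := fun n l x => F n x (w l)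
  have hFa : ∀ n, ∀ x ∈ Ω, ∀ u ∈ ball (0 : Evec m) 1, F n x u = ∑ l, a n l x * e l u :=
    fun n x hx u hu => (hreg n).eq_sum hw hs x hx u (ball_subset_closedBall hu)
  have ha2 : ∀ n l, ∀ x ∈ Ω, ContDiffAt ℝ 2 (a n l) x := fun n l x hx =>
    (hreg n).contDiffAt_slice hΩ hx (hw l)
  have hac : ∀ n l, ContinuousOn (a n l) Ω := fun n l x hx =>
    (ha2 n l x hx).continuousAt.continuousWithinAt
  have hrep : ∀ x₀ ∈ Ω, ∃ δ > 0, closedBall x₀ (2 * δ) ⊆ Ω ∧ ∃ κ : Evec m → ℝ, ContDiff ℝ ∞ κ ∧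
      HasCompactSupport κ ∧ ∀ n l, LocallyReproduced x₀ δ κ (a n l) := fun x₀ hx₀ => by
    obtain ⟨δ, hδ, hsub, κ, hκ, hc, h⟩ := exists_locallyReproduced (k := k) hm hΩ hx₀
    exact ⟨δ, hδ, hsub, κ, hκ, hc, fun n l => h (F n) (hreg n) (hD n) (w l) (hw l)⟩
  have has : ∀ n l, ∀ x ∈ Ω, ContDiffAt ℝ ∞ (a n l) x := fun n l x hx => by
    obtain ⟨δ, hδ, hsub, κ, hκ, hc, h⟩ := hrep x hx
    exact (h n l).contDiffAt ((hac n l).mono hsub) hκ hc (mem_ball_self hδ)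
  obtain ⟨φ, hφ, b, hbc, hb⟩ := exists_subseq_of_locallyReproduced hΩ hac hrep
    fun K hK hKΩ => exists_integral_abs_slice_bound hΩ hw hK hKΩ hreg (hbdd K hK hKΩ)
  have hlim := fun l => tendstoLocallyUniformlyOn_foldr_pdv hΩ (fun n => hac (φ n) l) (hbc l)
    (fun x₀ hx₀ => by
      obtain ⟨δ, hδ, hsub, κ, hκ, hc, h⟩ := hrep x₀ hx₀
      exact ⟨δ, hδ, hsub, κ, hκ, hc, fun n => h (φ n) l⟩) (hb l)
  have hb2 : ∀ l, ∀ x ∈ Ω, ContDiffAt ℝ 2 (b l) x := fun l x hx =>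
    ((hlim l).1 x hx).of_le ENat.LEInfty.out
  refine ⟨φ, hφ, fun x u => ∑ l, b l x * e l u, c2Hk_sum hb2 he, fun x hx u hu => ?_,
    fun α K₁ K₂ hK₁ hK₁Ω hK₂ hK₂B => ?_⟩
  · rw [Dk_tensor hΩ isOpen_ball (fun _ _ _ _ => rfl) hb2 (fun l => (he l).contDiff) hx hu]
    refine tendsto_nhds_unique (tendsto_finsetSum _ fun l _ => tendsto_finsetSum _ fun i _ =>
      tendsto_finsetSum _ fun j _ => (((hlim l).2 [i, j]).tendsto_at hx).const_mul _) ?_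
    refine tendsto_const_nhds.congr fun n => ?_
    rw [← hD (φ n) x hx u hu]
    exact Dk_tensor hΩ isOpen_ball (hFa (φ n)) (ha2 (φ n)) (fun l => (he l).contDiff) hx hu
  · obtain ⟨L, hL⟩ := exists_list_Dx_eq α
    simp only [hL]
    refine ((tendstoUniformlyOn_sum_mul (b := fun n l => L.foldr pdv (a (φ n) l))
      (fun l => (tendstoLocallyUniformlyOn_iff_forall_isCompact hΩ).1 ((hlim l).2 L) K₁ hK₁Ω hK₁)
      fun l => hK₂.exists_bound_of_continuousOn (he l).contDiff.continuous.continuousOn).congr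
        (Eventually.of_forall fun n q hq => ?_)).congr_right fun q hq => ?_
    · exact ((foldr_pdv_tensor hΩ (has (φ n)) (fun x hx => hFa (φ n) x hx q.2 (hK₂B hq.2)) L).2
        q.1 (hK₁Ω hq.1)).symm
    · exact ((foldr_pdv_tensor hΩ (fun l => (hlim l).1) (c := fun l => e l q.2)
        (fun _ _ => rfl) L).2 q.1 (hK₁Ω hq.1)).symm
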